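/- arXiv:1002.1552 — 3 statements merged into one kernel-verified Lean document; each statement's English description precedes it below -/
import Mathlib

section
/- For every ε > 0 there is a constant C_ε > 0 such that the following holds. Let G be an abelian group, let A ⊆ G be a finite nonempty set, and let K ≥ 1 be a real number with |A + A| ≤ K|A|. Then there exist an integer d ≤ C_ε·K^{4+ε}, a finite subgroup H ≤ G, and finite arithmetic progressions P₁, …, P_d ⊆ G such that, with M := H + P₁ + ⋯ + P_d, we have A ⊆ M and |M| ≤ exp(C_ε·K^{4+ε})·|A|. -/
open Pointwise

/-!
Translate `A` so that `0 ∈ A`. By the Plünnecke inequality and Ruzsa's covering lemma, `2A - A` is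
covered by at most `m ≤ K ^ 4` translates of `A - A`. Iterating the covering gives
`|k(A - A)| ≤ (6k) ^ m |A|` for all `k ≥ 1`. A finitely generated abelian group is residually
finite, so a quotient map models `A` and the sumsets of bounded length in a finite group.

Growth that slow forces `|(k + 1)(A - A)| ≤ (1 + 1 / (13 m ^ 2)) |k(A - A)|` for some
`k ≤ 260 m ^ 4`. Put `D = k(A - A)`. The characters with large Fourier coefficient at `D` are nearly
constant on `A - A`, and by Bogolyubov's argument with `20 m ^ 2` convolutions their Bohr set is
contained in a bounded multiple of `A - A`. On `A` the phases of these characters form a Freiman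
homomorphism to a real vector space; it respects the covering, so its image spans a subspace of
dimension at most `m`. A basis of successive minima of the lattice generated by the phases in that
subspace then gives a proper coset progression in the Bohr set of rank at most `m` and size at least
`|A| / (3m) ^ m`.

Finally, following Chang, an element of `A` outside `P - P` is added to the progression `P` as a new
step of length two. This keeps `P` proper and doubles its size, so by the polynomial growth it stops
after `O(m log m)` steps, with `A ⊆ P - P`.
-/

section GeometryOfNumbers

open Module MeasureTheory Metric

variable {E : Type*}

theorem card_le_of_linearMap_separated [NormedAddCommGroup E] [NormedSpace ℝ E]
    [FiniteDimensional ℝ E] {T : E →ₗ[ℝ] E} {R : ℝ} (hR : 0 < R) (hT : ∀ x, ‖x‖ ≤ R * ‖T x‖)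
    {S : Finset E} (hS : ∀ x ∈ S, ‖x‖ ≤ R)
    (hsep : ∀ x ∈ S, ∀ y ∈ S, x ≠ y → 1 ≤ ‖T (x - y)‖) :
    (S.card : ℝ) ≤ (3 * R) ^ finrank ℝ E * |LinearMap.det T| := by
  borelize E
  have hsurj : Function.Surjective T := LinearMap.injective_iff_surjective.1 <|
    (injective_iff_map_eq_zero T).2 fun x hx => by simpa [hx] using hT x
  have hdisj : (S : Set E).PairwiseDisjoint fun x => ball (T x) (1 / 2) := fun x hx y hy hxy =>
    ball_disjoint_ball <| by
      rw [dist_eq_norm, ← map_sub]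
      linarith [hsep x hx y hy hxy]
  have hsub : (⋃ x ∈ S, ball (T x) (1 / 2)) ⊆ T '' ball 0 (3 / 2 * R) := by
    refine Set.iUnion₂_subset fun x hx z hz => ?_
    obtain ⟨w, rfl⟩ := hsurj z
    refine ⟨w, ?_, rfl⟩
    rw [mem_ball_iff_norm, ← map_sub] at hz
    rw [mem_ball_zero_iff]
    nlinarith [norm_le_norm_add_norm_sub' w x, hS x hx, hT (w - x)]
  have hvol := measure_mono (μ := Measure.addHaar) hsub
  rw [measure_biUnion_finset hdisj fun _ _ => measurableSet_ball,
    Measure.addHaar_image_linearMap,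
    Measure.addHaar_ball_of_pos _ _ (by positivity : 0 < 3 / 2 * R)] at hvol
  simp only [Measure.addHaar_ball_of_pos _ _ (by norm_num : (0 : ℝ) < 1 / 2), Finset.sum_const,
    nsmul_eq_mul] at hvol
  rw [← mul_assoc, ← mul_assoc, ENNReal.mul_le_mul_iff_left (measure_ball_pos _ _ one_pos).ne'
    measure_ball_lt_top.ne, ← ENNReal.ofReal_natCast, ← ENNReal.ofReal_mul (by positivity),
    ← ENNReal.ofReal_mul (abs_nonneg _), ENNReal.ofReal_le_ofReal_iff (by positivity)] at hvol
  refine le_of_mul_le_mul_right (hvol.trans_eq ?_) (by positivity)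
  rw [mul_comm _ |LinearMap.det T|, mul_assoc, ← mul_pow]
  ring

/-- Successive minima of a set `S` of vectors: each `f j` is a shortest element of `S` outside the
span of its predecessors. -/
structure IsSuccessiveMinima [NormedAddCommGroup E] [NormedSpace ℝ E] {ι : Type*} [Preorder ι]
    (S : Set E) (f : ι → E) : Prop where
  mem (j) : f j ∈ S
  notMem_span (j) : f j ∉ Submodule.span ℝ (f '' Set.Iio j)
  norm_le (j) : ∀ x ∈ S, x ∉ Submodule.span ℝ (f '' Set.Iio j) → ‖f j‖ ≤ ‖x‖

theorem exists_isSuccessiveMinima [NormedAddCommGroup E] [NormedSpace ℝ E] [FiniteDimensional ℝ E]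
    {S : Set E} {R : ℝ} (hfin : (S ∩ closedBall 0 R).Finite)
    (hspan : Submodule.span ℝ (S ∩ closedBall 0 R) = ⊤) :
    ∃ f : Fin (finrank ℝ E) → E, IsSuccessiveMinima S f ∧ ∀ j, ‖f j‖ ≤ R := by
  have shortest (U : Submodule ℝ E) (hU : U ≠ ⊤) :
      ∃ y ∈ S, y ∉ U ∧ (∀ x ∈ S, x ∉ U → ‖y‖ ≤ ‖x‖) ∧ ‖y‖ ≤ R := by
    obtain ⟨x, hxS, hxU⟩ : ∃ x ∈ S ∩ closedBall 0 R, x ∉ U := by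
      by_contra! h
      exact hU (top_le_iff.1 (hspan ▸ Submodule.span_le.2 h))
    obtain ⟨y, ⟨⟨hyS, hyR⟩, hyU⟩, hmin⟩ := Set.exists_min_image {x ∈ S ∩ closedBall 0 R | x ∉ U}
      norm (hfin.subset (Set.sep_subset _ _)) ⟨x, hxS, hxU⟩
    rw [mem_closedBall_zero_iff] at hyR
    refine ⟨y, hyS, hyU, fun z hzS hzU => ?_, hyR⟩
    by_cases hzR : ‖z‖ ≤ R
    · exact hmin z ⟨⟨hzS, mem_closedBall_zero_iff.2 hzR⟩, hzU⟩
    · exact hyR.trans (not_le.1 hzR).le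
  choose! g hg using shortest
  let f : Fin (finrank ℝ E) → E := WellFounded.fix wellFounded_lt fun j F =>
    g (Submodule.span ℝ (Set.range fun i : Set.Iio j => F i i.2))
  have hf (j) : f j = g (Submodule.span ℝ (f '' Set.Iio j)) := by
    rw [Set.image_eq_range]
    exact WellFounded.fix_eq _ _ j
  have hne (j) : Submodule.span ℝ (f '' Set.Iio j) ≠ ⊤ := fun h => by
    have hcard := finrank_range_le_card (R := ℝ) fun i : Set.Iio j => f i
    rw [Set.finrank, ← Set.image_eq_range, h, finrank_top] at hcard
    exact hcard.not_gt (by simp)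
  have hmin (j) := hg _ (hne j)
  simp only [← hf] at hmin
  exact ⟨f, ⟨fun j => (hmin j).1, fun j => (hmin j).2.1, fun j => (hmin j).2.2.1⟩,
    fun j => (hmin j).2.2.2⟩

namespace IsSuccessiveMinima

theorem linearIndependent [NormedAddCommGroup E] [NormedSpace ℝ E] {ι : Type*} [LinearOrder ι]
    {S : Set E} {f : ι → E} (hf : IsSuccessiveMinima S f) : LinearIndependent ℝ f := by
  refine linearIndependent_iff'.2 fun s c hsum => ?_
  by_contra! h
  obtain ⟨i, hi, hci⟩ := h
  obtain ⟨j, hj, hmax⟩ := Finset.exists_max_image {i ∈ s | c i ≠ 0} id ⟨i, by simp [hi, hci]⟩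
  rw [Finset.mem_filter] at hj
  refine hf.notMem_span j ((Submodule.smul_mem_iff _ hj.2).1 ?_)
  rw [← Finset.add_sum_erase s _ hj.1] at hsum
  rw [eq_neg_of_add_eq_zero_left hsum]
  refine neg_mem (sum_mem fun i hi => ?_)
  rw [Finset.mem_erase] at hi
  by_cases hci : c i = 0
  · simp [hci]
  · exact Submodule.smul_mem _ _ <| Submodule.subset_span <| Set.mem_image_of_mem f <|
      (hmax i (by simp [hi, hci])).lt_of_ne hi.1

theorem exists_orthonormalBasis [NormedAddCommGroup E] [InnerProductSpace ℝ E]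
    [FiniteDimensional ℝ E] {S : Set E} {f : Fin (finrank ℝ E) → E}
    (hf : IsSuccessiveMinima S f) :
    ∃ e : OrthonormalBasis (Fin (finrank ℝ E)) ℝ E,
      ∀ x ∈ S, ∀ j, e.repr x j = 0 ∨ ‖f j‖ ≤ ‖x‖ := by
  let e := InnerProductSpace.gramSchmidtOrthonormalBasis (𝕜 := ℝ) (by simp) f
  have hspan (j) : Submodule.span ℝ (f '' Set.Iio j) ≤
      LinearMap.ker ((EuclideanSpace.projₗ j).comp e.repr.toLinearMap) := by
    refine Submodule.span_le.2 (Set.image_subset_iff.2 fun i hi => ?_)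
    exact InnerProductSpace.gramSchmidtOrthonormalBasis_inv_triangular' _ f hi
  refine ⟨e, fun x hx j => ?_⟩
  by_cases hxj : x ∈ Submodule.span ℝ (f '' Set.Iio j)
  · exact .inl (hspan j hxj)
  · exact .inr (hf.norm_le j x hx hxj)

end IsSuccessiveMinima

section OrthonormalBasis

variable {ι : Type*} [Fintype ι] [NormedAddCommGroup E] [InnerProductSpace ℝ E]

theorem norm_sq_eq_sum_repr_sq (e : OrthonormalBasis ι ℝ E) (x : E) :
    ‖x‖ ^ 2 = ∑ k, e.repr x k ^ 2 := by
  rw [← e.repr.norm_map, EuclideanSpace.real_norm_sq_eq]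

theorem exists_linearMap_norm_sq_eq_sum_div_sq (e : OrthonormalBasis ι ℝ E) (w : ι → ℝ) :
    ∃ T : E →ₗ[ℝ] E, LinearMap.det T = ∏ k, (w k)⁻¹ ∧
      ∀ x, ‖T x‖ ^ 2 = ∑ k, (e.repr x k / w k) ^ 2 := by
  classical
  let D := Matrix.diagonal fun k => (w k)⁻¹
  refine ⟨Matrix.toLin e.toBasis e.toBasis D, by simp [D], fun x => ?_⟩
  rw [norm_sq_eq_sum_repr_sq e]
  congr! 2 with k
  have := congrFun (Matrix.repr_toLin e.toBasis e.toBasis D x) k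
  rw [Matrix.mulVec_diagonal, inv_mul_eq_div] at this
  simpa using this

end OrthonormalBasis

/-- **Auerbach's lemma**. -/
theorem exists_auerbach_basis [NormedAddCommGroup E] [NormedSpace ℝ E] [FiniteDimensional ℝ E] :
    ∃ b : Basis (Fin (finrank ℝ E)) ℝ E, (∀ i, ‖b i‖ ≤ 1) ∧ ∀ x i, |b.repr x i| ≤ ‖x‖ := by
  let b₀ := finBasis ℝ E
  have hcont : Continuous fun v => |b₀.det v| := by
    simp only [Basis.det_apply]
    refine (Continuous.matrix_det (continuous_matrix fun i j => ?_)).abs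
    exact (b₀.coord i).continuous_of_finiteDimensional.comp (continuous_apply j)
  let B : Set (Fin (finrank ℝ E) → E) := Set.pi Set.univ fun _ => closedBall 0 1
  have hB {v} : v ∈ B ↔ ∀ i, ‖v i‖ ≤ 1 := by simp [B]
  obtain ⟨v, hv, hmax⟩ := (isCompact_univ_pi fun _ => isCompact_closedBall 0 1).exists_isMaxOn
    (s := B) ⟨0, by simp [hB]⟩ hcont.continuousOn
  replace hmax {w} (hw : ∀ i, ‖w i‖ ≤ 1) : |b₀.det w| ≤ |b₀.det v| := hmax (hB.2 hw)
  rw [hB] at hv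
  have hdet : b₀.det v ≠ 0 := by
    have hpos (i) : 0 < ‖b₀ i‖ := norm_pos_iff.2 (b₀.ne_zero i)
    refine abs_pos.1 (lt_of_lt_of_le ?_ <| hmax (w := fun i => ‖b₀ i‖⁻¹ • b₀ i) fun i => ?_)
    · rw [AlternatingMap.map_smul_univ, Basis.det_self, smul_eq_mul, mul_one]
      exact abs_pos.2 (Finset.prod_pos fun i _ => inv_pos.2 (hpos i)).ne'
    · rw [norm_smul, norm_inv, norm_norm, inv_mul_cancel₀ (hpos i).ne']
  obtain ⟨hli, hsp⟩ := (Basis.is_basis_iff_det b₀).2 hdet.isUnit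
  refine ⟨Basis.mk hli hsp.ge, by simpa using hv, fun x i => ?_⟩
  let c := LinearMap.toContinuousLinearMap ((Basis.mk hli hsp.ge).coord i)
  have hc : ‖c‖ ≤ 1 := ContinuousLinearMap.opNorm_le_of_unit_norm zero_le_one fun y hy => by
    have h := hmax (w := Function.update v i y) fun j => by
      rcases eq_or_ne j i with rfl | hj
      · simp [hy]
      · simpa [hj] using hv j
    have hcramer : b₀.det v * c y = b₀.det (Function.update v i y) :=
      DFunLike.congr_fun (b₀.det_smul_mk_coord_eq_det_update hli hsp.ge i) y
    rw [← hcramer, abs_mul] at h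
    exact le_of_mul_le_mul_left (by rwa [mul_one]) (abs_pos.2 hdet)
  exact (c.le_of_opNorm_le hc x).trans_eq (one_mul _)

section Lattice

variable [NormedAddCommGroup E] [InnerProductSpace ℝ E] [FiniteDimensional ℝ E] {L : AddSubgroup E}
  {R : ℝ}

theorem IsSuccessiveMinima.card_le {f : Fin (finrank ℝ E) → E}
    (hf : IsSuccessiveMinima (L : Set E) f) (hR : 0 < R) (hfR : ∀ j, ‖f j‖ ≤ R) {S : Finset E}
    (hSL : ∀ x ∈ S, x ∈ L) (hSR : ∀ x ∈ S, ‖x‖ ≤ R) :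
    (S.card : ℝ) ≤ 3 ^ finrank ℝ E * ∏ j, (R / ‖f j‖) := by
  obtain ⟨e, he⟩ := hf.exists_orthonormalBasis
  obtain ⟨T, hdet, hT⟩ := exists_linearMap_norm_sq_eq_sum_div_sq e fun j => ‖f j‖
  have hpos (j) : 0 < ‖f j‖ := norm_pos_iff.2 (hf.linearIndependent.ne_zero j)
  have hexpand (x) : ‖x‖ ≤ R * ‖T x‖ := by
    refine le_of_sq_le_sq ?_ (by positivity)
    rw [mul_pow, hT, norm_sq_eq_sum_repr_sq e, Finset.mul_sum]
    gcongr with k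
    rw [div_pow, ← mul_div_assoc, le_div_iff₀ (pow_pos (hpos k) 2), mul_comm]
    gcongr
    exact hfR k
  have hsep (x) (hx : x ∈ L) (hx0 : x ≠ 0) : 1 ≤ ‖T x‖ := by
    have := norm_pos_iff.2 hx0
    refine le_of_sq_le_sq ?_ (norm_nonneg _)
    calc (1 : ℝ) ^ 2 = ∑ k, (e.repr x k / ‖x‖) ^ 2 := by
          simp_rw [div_pow, ← Finset.sum_div, ← norm_sq_eq_sum_repr_sq]
          field_simp
      _ ≤ ‖T x‖ ^ 2 := by
          rw [hT]
          gcongr ∑ k, ?_ with k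
          rcases he x hx k with h | h
          · simp [h]
          · rw [div_pow, div_pow]
            have := hpos k
            gcongr
  refine (card_le_of_linearMap_separated hR hexpand hSR fun x hx y hy hxy =>
    hsep _ (L.sub_mem (hSL x hx) (hSL y hy)) (sub_ne_zero.2 hxy)).trans_eq ?_
  rw [hdet, abs_of_nonneg (by positivity), Finset.prod_inv_distrib, Finset.prod_div_distrib]
  simp only [Finset.prod_const, Finset.card_univ, Fintype.card_fin]
  ring

theorem exists_progression_of_span_eq_top (hR : 0 < R)
    (hfin : ((L : Set E) ∩ closedBall 0 R).Finite)
    (hspan : Submodule.span ℝ ((L : Set E) ∩ closedBall 0 R) = ⊤) :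
    ∃ (f : Fin (finrank ℝ E) → E) (N : Fin (finrank ℝ E) → ℕ),
      (∀ j, f j ∈ L) ∧ LinearIndependent ℝ f ∧ (∑ j, N j * ‖f j‖ ≤ R) ∧
      (((L : Set E) ∩ closedBall 0 R).ncard : ℝ) ≤
        (3 * finrank ℝ E) ^ finrank ℝ E * ∏ j, ((N j : ℝ) + 1) := by
  obtain ⟨f, hf, hfR⟩ := exists_isSuccessiveMinima hfin hspan
  let n := finrank ℝ E
  refine ⟨f, fun j => ⌊R / (n * ‖f j‖)⌋₊, hf.mem, hf.linearIndependent, ?_, ?_⟩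
  · calc ∑ j, (⌊R / (n * ‖f j‖)⌋₊ : ℝ) * ‖f j‖ ≤ ∑ _j : Fin n, R / n := by
          gcongr with j
          have hpos : 0 < ‖f j‖ := norm_pos_iff.2 (hf.linearIndependent.ne_zero j)
          rw [← le_div_iff₀ hpos, div_div]
          exact Nat.floor_le (by positivity)
      _ ≤ R := by
          simpa [mul_div_left_comm] using mul_le_of_le_one_right hR.le (div_self_le_one (n : ℝ))
  · rw [Set.ncard_eq_toFinset_card _ hfin]
    refine (hf.card_le hR hfR (fun x hx => ?_) (fun x hx => ?_)).trans ?_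
    · exact ((hfin.mem_toFinset).1 hx).1
    · exact mem_closedBall_zero_iff.1 ((hfin.mem_toFinset).1 hx).2
    · rw [mul_pow, mul_assoc]
      gcongr
      calc ∏ j, R / ‖f j‖ ≤ ∏ j : Fin n, (n * ((⌊R / (n * ‖f j‖)⌋₊ : ℝ) + 1)) := by
            gcongr with j
            have hn : (0 : ℝ) < n := by exact_mod_cast j.pos
            rw [← div_le_iff₀' hn, div_div, mul_comm]
            exact (Nat.lt_floor_add_one _).le
        _ = n ^ n * ∏ j, ((⌊R / (n * ‖f j‖)⌋₊ : ℝ) + 1) := by simp [n, Finset.prod_mul_distrib]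

theorem exists_progression_of_addSubgroup (hR : 0 < R)
    (hfin : ((L : Set E) ∩ closedBall 0 R).Finite) :
    ∃ n ≤ finrank ℝ E, ∃ (f : Fin n → E) (N : Fin n → ℕ),
      (∀ j, f j ∈ L) ∧ LinearIndependent ℝ f ∧ (∑ j, N j * ‖f j‖ ≤ R) ∧
      (((L : Set E) ∩ closedBall 0 R).ncard : ℝ) ≤ (3 * n) ^ n * ∏ j, ((N j : ℝ) + 1) := by
  let W := Submodule.span ℝ ((L : Set E) ∩ closedBall 0 R)
  let L' := L.comap W.subtype.toAddMonoidHom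
  have hball : (L' : Set W) ∩ closedBall 0 R = (↑) ⁻¹' ((L : Set E) ∩ closedBall 0 R) := by
    ext x
    simp [L']
  have himage : (↑) '' ((L' : Set W) ∩ closedBall 0 R) = (L : Set E) ∩ closedBall 0 R := by
    rw [hball, Set.image_preimage_eq_iff, Subtype.range_coe]
    exact Submodule.subset_span
  obtain ⟨f, N, hfL, hf, hN, hcard⟩ := exists_progression_of_span_eq_top (L := L') hR
    (hball ▸ hfin.preimage Subtype.val_injective.injOn)
    (hball ▸ Submodule.span_span_coe_preimage)
  refine ⟨finrank ℝ W, W.finrank_le, fun j => f j, N, hfL,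
    hf.map' W.subtype W.ker_subtype, hN, ?_⟩
  rwa [← himage, Set.ncard_image_of_injective _ Subtype.val_injective]

end Lattice

theorem norm_toLp_le_sum_abs {ι : Type*} [Fintype ι] (x : ι → ℝ) :
    ‖(WithLp.toLp 2 x : EuclideanSpace ℝ ι)‖ ≤ ∑ j, |x j| := by
  refine le_of_sq_le_sq ?_ (Finset.sum_nonneg fun _ _ => abs_nonneg _)
  rw [EuclideanSpace.real_norm_sq_eq]
  simpa using Finset.sum_sq_le_sq_sum_of_nonneg fun j (_ : j ∈ Finset.univ) => abs_nonneg (x j)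

theorem exists_linearEquiv_euclideanSpace [NormedAddCommGroup E] [NormedSpace ℝ E]
    [FiniteDimensional ℝ E] :
    ∃ Φ : E ≃ₗ[ℝ] EuclideanSpace ℝ (Fin (finrank ℝ E)),
      ∀ x, ‖Φ x‖ ≤ finrank ℝ E * ‖x‖ ∧ ‖x‖ ≤ finrank ℝ E * ‖Φ x‖ := by
  obtain ⟨b, hb, hrepr⟩ := exists_auerbach_basis (E := E)
  refine ⟨b.equivFun.trans (WithLp.linearEquiv 2 ℝ _).symm, fun x => ⟨?_, ?_⟩⟩
  · calc _ ≤ ∑ i, |b.repr x i| := norm_toLp_le_sum_abs _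
      _ ≤ ∑ _i : Fin (finrank ℝ E), ‖x‖ := by gcongr with i; exact hrepr x i
      _ = _ := by simp
  · set y := (b.equivFun.trans (WithLp.linearEquiv 2 ℝ _).symm) x
    calc ‖x‖ = ‖∑ i, y i • b i‖ := congrArg norm (b.sum_repr x).symm
      _ ≤ ∑ i, ‖y i • b i‖ := norm_sum_le _ _
      _ ≤ ∑ _i : Fin (finrank ℝ E), ‖y‖ := by
          gcongr with i
          rw [norm_smul]
          exact (mul_le_of_le_one_right (norm_nonneg _) (hb i)).trans (PiLp.norm_apply_le y i)
      _ = _ := by simp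

theorem norm_sum_nsmul_le [SeminormedAddCommGroup E] {ι : Type*} {s : Finset ι} {f : ι → E}
    {c N : ι → ℕ} (hc : ∀ j ∈ s, c j ≤ N j) : ‖∑ j ∈ s, c j • f j‖ ≤ ∑ j ∈ s, N j * ‖f j‖ := by
  refine norm_sum_le_of_le s fun j hj => norm_nsmul_le.trans ?_
  gcongr
  exact hc j hj

section Distortion

variable {F : Type*} [SeminormedAddCommGroup E] [SeminormedAddCommGroup F] {L : AddSubgroup E}
  {φ : E →+ F} {C r : ℝ}

theorem image_inter_closedBall_subset (hC : 0 ≤ C) (hφ : ∀ x, ‖φ x‖ ≤ C * ‖x‖) :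
    φ '' ((L : Set E) ∩ closedBall 0 r) ⊆ (L.map φ : Set F) ∩ closedBall 0 (C * r) := by
  rintro _ ⟨x, ⟨hx, hxr⟩, rfl⟩
  refine ⟨⟨x, hx, rfl⟩, mem_closedBall_zero_iff.2 ((hφ x).trans ?_)⟩
  gcongr
  exact mem_closedBall_zero_iff.1 hxr

theorem map_inter_closedBall_subset (hC : 0 ≤ C) (hφ : ∀ x, ‖x‖ ≤ C * ‖φ x‖) :
    (L.map φ : Set F) ∩ closedBall 0 r ⊆ φ '' ((L : Set E) ∩ closedBall 0 (C * r)) := by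
  rintro _ ⟨⟨x, hx, rfl⟩, hxr⟩
  refine ⟨x, ⟨hx, mem_closedBall_zero_iff.2 ((hφ x).trans ?_)⟩, rfl⟩
  gcongr
  exact mem_closedBall_zero_iff.1 hxr

end Distortion

theorem exists_progression_of_finite_inter_closedBall [NormedAddCommGroup E] [NormedSpace ℝ E]
    [FiniteDimensional ℝ E] {L : AddSubgroup E} {ρ : ℝ} (hρ : 0 < ρ)
    (hfin : ((L : Set E) ∩ closedBall 0 ρ).Finite) {m : ℕ} (hm : 1 ≤ m)
    (hdim : finrank ℝ E ≤ m) :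
    ∃ n ≤ m, ∃ (f : Fin n → E) (N : Fin n → ℕ),
      (∀ j, f j ∈ L) ∧ LinearIndependent ℝ f ∧ (∀ c ≤ N, ‖∑ j, c j • f j‖ ≤ ρ) ∧
      (((L : Set E) ∩ closedBall 0 (ρ / m ^ 2)).ncard : ℝ) ≤
        (3 * m) ^ m * ∏ j, ((N j : ℝ) + 1) := by
  obtain ⟨Φ, hΦ⟩ := exists_linearEquiv_euclideanSpace (E := E)
  let φ := Φ.toLinearMap.toAddMonoidHom
  have hm0 : (0 : ℝ) < m := by exact_mod_cast hm
  have hφ_le (x) : ‖φ x‖ ≤ m * ‖x‖ := (hΦ x).1.trans (by gcongr)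
  have le_hφ (x) : ‖x‖ ≤ m * ‖φ x‖ :=
    (hΦ x).2.trans (by gcongr ?_ * ‖Φ x‖; exact_mod_cast hdim)
  have hmap := map_inter_closedBall_subset (L := L) (r := ρ / m) hm0.le le_hφ
  rw [mul_div_cancel₀ ρ hm0.ne'] at hmap
  have hfin_map := (hfin.image φ).subset hmap
  obtain ⟨n, hn, f, N, hfL, hf, hN, hcard⟩ :=
    exists_progression_of_addSubgroup (by positivity) hfin_map
  rw [finrank_euclideanSpace, Fintype.card_fin] at hn
  have hnm : n ≤ m := hn.trans hdim
  refine ⟨n, hnm, Φ.symm ∘ f, N, fun j => ?_,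
    hf.map' Φ.symm.toLinearMap Φ.symm.ker, fun c hc => ?_, ?_⟩
  · obtain ⟨x, hx, hxf⟩ := hfL j
    rw [Function.comp_apply, ← hxf]
    exact (Φ.symm_apply_apply x).symm ▸ hx
  · have hsum : φ (∑ j, c j • (Φ.symm ∘ f) j) = ∑ j, c j • f j := by simp [φ]
    refine (le_hφ _).trans ((le_div_iff₀' hm0).1 ?_)
    exact hsum ▸ (norm_sum_nsmul_le fun j _ => hc j).trans hN
  · have hsub := image_inter_closedBall_subset (L := L) (r := ρ / m ^ 2) hm0.le hφ_le
    rw [show m * (ρ / m ^ 2) = ρ / m by field_simp] at hsub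
    have hle := Set.ncard_le_ncard hsub hfin_map
    rw [Set.ncard_image_of_injective (f := φ) _ Φ.injective] at hle
    refine (Nat.cast_le.2 hle).trans (hcard.trans ?_)
    have h3m : (1 : ℝ) ≤ 3 * m := by norm_cast; omega
    gcongr
    exact (pow_le_pow_left₀ (by positivity) (by gcongr) n).trans (pow_le_pow_right₀ h3m hnm)

end GeometryOfNumbers

/-- A coset progression of rank `n`, given by a subgroup `H`, steps `g j` and bounds `N j`: it
parametrises the elements `h + ∑ j, c j • g j` with `h ∈ H` and `c ≤ N`. -/
structure CosetProgression (G : Type*) [AddCommGroup G] (n : ℕ) where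
  subgroup : AddSubgroup G
  step : Fin n → G
  bound : Fin n → ℕ

theorem single_one_le {ι : Type*} [DecidableEq ι] {c : ι → ℕ} {j : ι} (hj : c j ≠ 0) :
    Pi.single j 1 ≤ c :=
  update_le_iff.2 ⟨Nat.one_le_iff_ne_zero.2 hj, fun _ _ => Nat.zero_le _⟩

namespace CosetProgression

variable {G G' : Type*} [AddCommGroup G] [AddCommGroup G'] {n : ℕ} (P : CosetProgression G n)

/-- The point of a coset progression with given subgroup component and multiplicities. -/
def eval (p : G × (Fin n → ℕ)) : G := p.1 + ∑ j, p.2 j • P.step j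

/-- The parameters of a coset progression. -/
def box : Set (G × (Fin n → ℕ)) := (P.subgroup : Set G) ×ˢ Set.Iic P.bound

/-- The points of a coset progression. -/
def carrier : Set G := P.eval '' P.box

/-- A coset progression is proper if its parametrisation is injective. -/
def IsProper : Prop := Set.InjOn P.eval P.box

/-- The number of parameters of a coset progression, with value `0` if the subgroup is infinite. -/
noncomputable def size : ℕ := Nat.card P.subgroup * ∏ j, (P.bound j + 1)

variable {P}

theorem eval_mem_carrier {h : G} (hh : h ∈ P.subgroup) {c : Fin n → ℕ} (hc : c ≤ P.bound) :
    P.eval (h, c) ∈ P.carrier :=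
  Set.mem_image_of_mem _ ⟨hh, hc⟩

theorem subgroup_subset_carrier : (P.subgroup : Set G) ⊆ P.carrier := fun h hh => by
  simpa [eval] using eval_mem_carrier (P := P) hh fun _ => Nat.zero_le _

theorem ncard_box : P.box.ncard = P.size := by
  rw [box, size, Set.ncard_prod, ← Finset.coe_Iic, Set.ncard_coe_finset, Pi.card_Iic]
  simp_rw [Nat.card_Iic]
  rfl

theorem IsProper.ncard_carrier (hP : P.IsProper) : P.carrier.ncard = P.size := by
  rw [carrier, hP.ncard_image, ncard_box]

theorem eval_add_step (h : G) (c : Fin n → ℕ) (j : Fin n) :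
    P.eval (h, c + Pi.single j 1) = P.eval (h, c) + P.step j := by
  simp [eval, add_smul, Finset.sum_add_distrib, add_assoc, Pi.single_apply]

theorem step_mem_carrier {j : Fin n} (hj : P.bound j ≠ 0) : P.step j ∈ P.carrier := by
  have h := eval_mem_carrier (P := P) (zero_mem _) (c := Pi.single j 1)
    (single_one_le hj)
  simpa [eval, Pi.single_apply] using h

theorem map_eval {ψ : G → G'}
    (hψ : ∀ x ∈ P.carrier, ∀ y ∈ P.carrier, x + y ∈ P.carrier → ψ (x + y) = ψ x + ψ y) {h : G}
    (hh : h ∈ P.subgroup) {c : Fin n → ℕ} (hc : c ≤ P.bound) :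
    ψ (P.eval (h, c)) = ψ h + ∑ j, c j • ψ (P.step j) := by
  induction c using WellFoundedLT.induction with
  | ind c ih =>
  by_cases hc0 : c = 0
  · simp [eval, hc0]
  obtain ⟨j, hj⟩ := Function.ne_iff.1 hc0
  have hle : Pi.single j 1 ≤ c := single_one_le hj
  obtain ⟨c, rfl⟩ := le_iff_exists_add'.1 hle
  have hc' : c ≤ P.bound := le_self_add.trans hc
  have hPj : P.bound j ≠ 0 := (Nat.pos_of_ne_zero hj |>.trans_le (hc j)).ne'
  have hmem := eval_mem_carrier hh hc
  rw [eval_add_step] at hmem ⊢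
  rw [hψ _ (eval_mem_carrier hh hc') _ (step_mem_carrier hPj) hmem,
    ih c (lt_add_of_pos_right c (Pi.single_pos.2 one_pos)) hc']
  simp [add_smul, Finset.sum_add_distrib, add_assoc, Pi.single_apply]

theorem IsProper.exists_image (hP : P.IsProper) {ψ : G → G'} (hinj : Set.InjOn ψ P.carrier)
    (hψ : ∀ x ∈ P.carrier, ∀ y ∈ P.carrier, x + y ∈ P.carrier → ψ (x + y) = ψ x + ψ y) :
    ∃ Q : CosetProgression G' n, Q.IsProper ∧ Q.carrier = ψ '' P.carrier ∧ Q.size = P.size := by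
  have hsub := P.subgroup_subset_carrier
  have hadd {x y} (hx : x ∈ P.subgroup) (hy : y ∈ P.subgroup) : ψ (x + y) = ψ x + ψ y :=
    hψ x (hsub hx) y (hsub hy) (hsub (add_mem hx hy))
  have h0 : ψ 0 = 0 := by simpa using hadd (zero_mem _) (zero_mem _)
  let H : AddSubgroup G' :=
    { carrier := ψ '' P.subgroup
      zero_mem' := ⟨0, zero_mem _, h0⟩
      add_mem' := by
        rintro _ _ ⟨x, hx, rfl⟩ ⟨y, hy, rfl⟩
        exact ⟨x + y, add_mem hx hy, hadd hx hy⟩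
      neg_mem' := by
        rintro _ ⟨x, hx, rfl⟩
        refine ⟨-x, neg_mem hx, eq_neg_of_add_eq_zero_left ?_⟩
        rw [← hadd (neg_mem hx) hx, neg_add_cancel, h0] }
  let Q : CosetProgression G' n := ⟨H, ψ ∘ P.step, P.bound⟩
  have hbox : Q.box = Prod.map ψ id '' P.box := by
    rw [box, box, Set.prodMap_image_prod, Set.image_id]
    rfl
  have heval : Set.EqOn (Q.eval ∘ Prod.map ψ id) (ψ ∘ P.eval) P.box := fun p hp =>
    (map_eval hψ hp.1 hp.2).symm
  refine ⟨Q, ?_, ?_, ?_⟩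
  · rw [IsProper, hbox]
    exact ((hinj.comp hP (Set.mapsTo_image _ _)).congr heval.symm).image_of_comp
  · rw [carrier, hbox, carrier, ← Set.image_comp, ← Set.image_comp, heval.image_eq]
  · rw [size, size]
    congr 1
    exact Nat.card_image_of_injOn (hinj.mono hsub)

theorem IsProper.size_le_card (hP : P.IsProper) {S : Finset G} (hPS : P.carrier ⊆ S) :
    P.size ≤ S.card := by
  rw [← hP.ncard_carrier, ← Set.ncard_coe_finset]
  exact Set.ncard_le_ncard hPS

theorem size_pos (hP : (P.subgroup : Set G).Finite) : 0 < P.size := by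
  have := hP.to_subtype
  exact Nat.mul_pos Nat.card_pos (Finset.prod_pos fun j _ => Nat.succ_pos _)

variable (P) in
/-- The coset progression obtained from `P` by adding a step `a` with bound `1`; its points are
those of `P` and their translates by `a`. -/
def cons (a : G) : CosetProgression G (n + 1) :=
  ⟨P.subgroup, Fin.cons a P.step, Fin.cons 1 P.bound⟩

theorem size_cons (a : G) : (P.cons a).size = 2 * P.size := by
  simp only [size, cons, Fin.prod_univ_succ, Fin.cons_zero, Fin.cons_succ]
  ring

theorem eval_cons (a h : G) (c : Fin (n + 1) → ℕ) :
    (P.cons a).eval (h, c) = c 0 • a + P.eval (h, Fin.tail c) := by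
  simp [eval, cons, Fin.sum_univ_succ, Fin.tail, add_left_comm]

theorem mem_box_cons {a h : G} {c : Fin (n + 1) → ℕ} :
    (h, c) ∈ (P.cons a).box ↔ c 0 ≤ 1 ∧ (h, Fin.tail c) ∈ P.box := by
  simp [box, cons, Pi.le_def, Fin.forall_fin_succ, Fin.tail, and_left_comm]

theorem carrier_cons_subset {a : G} {B : Set G} (h0 : 0 ∈ B) (ha : a ∈ B) :
    (P.cons a).carrier ⊆ P.carrier + B := by
  rintro _ ⟨⟨h, c⟩, hc, rfl⟩
  obtain ⟨hc0, hc⟩ := mem_box_cons.1 hc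
  rw [eval_cons, add_comm (c 0 • a)]
  refine Set.add_mem_add (Set.mem_image_of_mem _ hc) ?_
  interval_cases c 0 <;> simpa

theorem IsProper.cons (hP : P.IsProper) {a : G} (ha : a ∉ P.carrier - P.carrier) :
    (P.cons a).IsProper := by
  have hdisj {p q} (hp : p ∈ P.box) (hq : q ∈ P.box) : a + P.eval p ≠ P.eval q := fun h =>
    ha ⟨_, ⟨q, hq, rfl⟩, _, ⟨p, hp, rfl⟩, sub_eq_of_eq_add h.symm⟩
  rintro ⟨h, c⟩ hc ⟨h', c'⟩ hc' heq
  obtain ⟨hc0, hc⟩ := mem_box_cons.1 hc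
  obtain ⟨hc0', hc'⟩ := mem_box_cons.1 hc'
  simp only [eval_cons] at heq
  suffices hhead : c 0 = c' 0 by
    obtain ⟨rfl, htail⟩ := Prod.ext_iff.1 (hP hc hc' (by simpa [hhead] using heq))
    rw [← Fin.cons_self_tail c, ← Fin.cons_self_tail c', hhead]
    exact congrArg _ (congrArg _ htail)
  interval_cases c 0 <;> interval_cases c' 0 <;> simp only [zero_smul, one_smul, zero_add] at heq
  · rfl
  · exact absurd heq.symm (hdisj hc' hc)
  · exact absurd heq (hdisj hc hc')
  · rfl

end CosetProgression

/-- The arithmetic progression `b, b + s, …, b + (L - 1) • s`. -/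
def progression {G : Type*} [AddCommGroup G] (b s : G) (L : ℕ) : Set G :=
  {y | ∃ j : ℕ, j < L ∧ y = b + j • s}

section Progression

variable {G : Type*} [AddCommGroup G]

theorem progression_eq_image (b s : G) (L : ℕ) :
    progression b s L = (fun j : ℕ => b + j • s) '' Set.Iio L := by
  ext y
  simp [progression, eq_comm]

theorem ncard_progression_le (b s : G) (L : ℕ) : (progression b s L).ncard ≤ L := by
  rw [progression_eq_image]
  exact (Set.ncard_image_le (Set.finite_Iio L)).trans_eq (by simp [Set.ncard_eq_toFinset_card'])

theorem ncard_sum_le_prod {ι : Type*} (S : ι → Set G) (s : Finset ι) :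
    (∑ i ∈ s, S i).ncard ≤ ∏ i ∈ s, (S i).ncard := by
  classical
  induction s using Finset.induction with
  | empty => simp [← Set.singleton_zero]
  | insert i s hi ih =>
    rw [Finset.sum_insert hi, Finset.prod_insert hi]
    exact (Set.natCard_add_le).trans (Nat.mul_le_mul_left _ ih)

theorem ncard_add_sum_progression_le (H : AddSubgroup G) {d : ℕ} (b s : Fin d → G)
    (len : Fin d → ℕ) :
    ((H : Set G) + ∑ i, progression (b i) (s i) (len i)).ncard ≤ Nat.card H * ∏ i, len i :=
  Set.natCard_add_le.trans <| Nat.mul_le_mul_left _ <| (ncard_sum_le_prod _ _).trans <|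
    Finset.prod_le_prod' fun _ _ => ncard_progression_le _ _ _

end Progression

namespace CosetProgression

variable {G : Type*} [AddCommGroup G] {n : ℕ} (P : CosetProgression G n)

theorem carrier_sub_carrier_subset :
    P.carrier - P.carrier ⊆ (P.subgroup : Set G) +
      ∑ j, progression (-(P.bound j • P.step j)) (P.step j) (2 * P.bound j + 1) := by
  rintro _ ⟨_, ⟨⟨h, c⟩, ⟨hh, hc⟩, rfl⟩, _, ⟨⟨h', c'⟩, ⟨hh', hc'⟩, rfl⟩, rfl⟩
  refine ⟨h - h', sub_mem hh hh', ∑ j, (c j • P.step j - c' j • P.step j),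
    (Set.mem_fintype_sum _ _).2 ⟨_, fun j => ⟨P.bound j + c j - c' j, ?_, ?_⟩, rfl⟩, ?_⟩
  · have : c j ≤ P.bound j := hc j
    omega
  · have : c' j ≤ P.bound j + c j := (hc' j).trans le_self_add
    rw [sub_nsmul _ this, add_nsmul]
    abel
  · simp only [eval, Finset.sum_sub_distrib]
    abel

theorem card_mul_prod_two_mul_bound_le :
    Nat.card P.subgroup * ∏ j, (2 * P.bound j + 1) ≤ 2 ^ n * P.size :=
  calc Nat.card P.subgroup * ∏ j, (2 * P.bound j + 1)
      ≤ Nat.card P.subgroup * ∏ j, 2 * (P.bound j + 1) := by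
        gcongr with j
        omega
    _ = 2 ^ n * P.size := by
        simp only [Finset.prod_mul_distrib, Finset.prod_const, Finset.card_univ, Fintype.card_fin,
          size]
        ring

end CosetProgression

/-- The set `S` contains a proper coset progression of rank at most `m` whose size is at least
`a / (3 * m) ^ m`. -/
def HasLargeCosetProgression {G : Type*} [AddCommGroup G] (S : Set G) (m a : ℕ) : Prop :=
  ∃ n ≤ m, ∃ P : CosetProgression G n, P.IsProper ∧ P.carrier ⊆ S ∧ a ≤ (3 * m) ^ m * P.size

namespace HasLargeCosetProgression

variable {G G' : Type*} [AddCommGroup G] [AddCommGroup G'] {S S' : Set G} {m a : ℕ}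

theorem mono (h : HasLargeCosetProgression S m a) (hS : S ⊆ S') :
    HasLargeCosetProgression S' m a := by
  obtain ⟨n, hn, P, hP, hPS, hsize⟩ := h
  exact ⟨n, hn, P, hP, hPS.trans hS, hsize⟩

theorem image (h : HasLargeCosetProgression S m a) {ψ : G → G'} (hinj : Set.InjOn ψ S)
    (hψ : ∀ x ∈ S, ∀ y ∈ S, x + y ∈ S → ψ (x + y) = ψ x + ψ y) :
    HasLargeCosetProgression (ψ '' S) m a := by
  obtain ⟨n, hn, P, hP, hPS, hsize⟩ := h
  obtain ⟨Q, hQ, hQP, hQsize⟩ := hP.exists_image (hinj.mono hPS) fun x hx y hy hxy =>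
    hψ x (hPS hx) y (hPS hy) (hPS hxy)
  exact ⟨n, hn, Q, hQ, hQP ▸ Set.image_mono hPS, hQsize ▸ hsize⟩

end HasLargeCosetProgression

/-- The finite set `A` contains `0` and has covering dimension at most `m`: the set `2A - A` is
covered by at most `m` translates of `A - A`, and `A - A` is at most `2 ^ m` times as large
as `A`. This is the form in which small doubling enters the argument; it forces the multiples
`k • (A - A)` to grow like `k ^ m`. -/
structure HasCoveringDim {G : Type*} [AddCommGroup G] [DecidableEq G] (A : Finset G) (m : ℕ) :
    Prop where
  zero_mem : 0 ∈ A
  exists_cover : ∃ T ⊆ A + A - A, T.card ≤ m ∧ A + A - A ⊆ T + (A - A)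
  card_sub_le : (A - A).card ≤ 2 ^ m * A.card

section CoveringDim

variable {G G' : Type*} [AddCommGroup G] [DecidableEq G] [AddCommGroup G'] [DecidableEq G']
  {A B T X : Finset G} {K : ℝ} {m : ℕ}

theorem sub_add_sub_subset_of_cover (hT : A + A - A ⊆ T + (A - A)) :
    A - A + (A - A) ⊆ T - T + (A - A) :=
  calc A - A + (A - A) = A + A - A - A := by rw [sub_add_sub_comm, sub_add_eq_sub_sub]
    _ ⊆ T + (A - A) - A := Finset.sub_subset_sub_right hT
    _ = T - (A + A - A) := by rw [sub_sub_eq_add_sub, sub_add_eq_sub_sub, ← add_sub_assoc]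
    _ ⊆ T - (T + (A - A)) := Finset.sub_subset_sub_left hT
    _ = T - T + (A - A) := by rw [sub_add_eq_sub_sub, sub_eq_add_neg _ (A - A), neg_sub]

theorem succ_nsmul_subset_of_add_subset (h : B + B ⊆ X + B) (k : ℕ) :
    (k + 1) • B ⊆ k • X + B := by
  induction k with
  | zero => simp
  | succ k ih =>
    calc (k + 1 + 1) • B = (k + 1) • B + B := succ_nsmul _ _
      _ ⊆ k • X + B + B := Finset.add_subset_add_right ih
      _ ⊆ k • X + (X + B) := by rw [add_assoc]; exact Finset.add_subset_add_left h
      _ = (k + 1) • X + B := by rw [succ_nsmul, add_assoc]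

theorem exists_sum_smul_eq_of_mem_nsmul_sub {k : ℕ} {x : G} (hx : x ∈ k • (T - T)) :
    ∃ c : T → ℤ, (∀ t, |c t| ≤ k) ∧ ∑ t, c t • (t : G) = x := by
  induction k generalizing x with
  | zero => exact ⟨0, by simp, by simpa [eq_comm] using hx⟩
  | succ k ih =>
    rw [succ_nsmul] at hx
    obtain ⟨y, hy, _, hd, rfl⟩ := Finset.mem_add.1 hx
    obtain ⟨s, hs, t, ht, rfl⟩ := Finset.mem_sub.1 hd
    obtain ⟨c, hc, rfl⟩ := ih hy
    refine ⟨c + (Pi.single ⟨s, hs⟩ 1 - Pi.single ⟨t, ht⟩ 1), fun u => ?_, ?_⟩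
    · have hle : |(Pi.single ⟨s, hs⟩ 1 - Pi.single ⟨t, ht⟩ 1 : T → ℤ) u| ≤ 1 := by
        simp only [Pi.sub_apply, Pi.single_apply]
        split_ifs <;> simp
      rw [Pi.add_apply, Nat.cast_succ]
      exact (abs_add_le _ _).trans (add_le_add (hc u) hle)
    · simp [add_smul, sub_smul, Finset.sum_add_distrib, Pi.single_apply]

theorem card_nsmul_sub_self_le (T : Finset G) (k : ℕ) :
    (k • (T - T)).card ≤ (2 * k + 1) ^ T.card := by
  let C : Finset (T → ℤ) := Fintype.piFinset fun _ => Finset.Icc (-(k : ℤ)) k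
  have hsub : k • (T - T) ⊆ C.image fun c : T → ℤ => ∑ t, c t • (t : G) := fun x hx => by
    obtain ⟨c, hc, rfl⟩ := exists_sum_smul_eq_of_mem_nsmul_sub hx
    exact Finset.mem_image_of_mem _ <|
      Fintype.mem_piFinset.2 fun t => Finset.mem_Icc.2 (abs_le.1 (hc t))
  refine (Finset.card_le_card hsub).trans (Finset.card_image_le.trans_eq ?_)
  have hcard : ((k : ℤ) + 1 + k).toNat = 2 * k + 1 := by omega
  simp [C, Fintype.card_piFinset, hcard]

theorem image_sub_distrib (φ : G →+ G') (X Y : Finset G) :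
    (X - Y).image φ = X.image φ - Y.image φ :=
  Finset.image_image₂_distrib (map_sub φ)

namespace HasCoveringDim

theorem one_le (hA : HasCoveringDim A m) : 1 ≤ m := by
  obtain ⟨T, -, hT, hcov⟩ := hA.exists_cover
  have hne : A.Nonempty := ⟨0, hA.zero_mem⟩
  exact (Finset.card_pos.2 (((hne.add hne).sub hne).mono hcov).of_add_left).trans_le hT

theorem zero_mem_sub (hA : HasCoveringDim A m) : 0 ∈ A - A :=
  Finset.mem_sub.2 ⟨0, hA.zero_mem, 0, hA.zero_mem, sub_zero 0⟩

theorem subset_sub (hA : HasCoveringDim A m) : A ⊆ A - A := fun a ha =>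
  Finset.mem_sub.2 ⟨a, ha, 0, hA.zero_mem, sub_zero a⟩

theorem card_nsmul_sub_le (hA : HasCoveringDim A m) {k : ℕ} (hk : 1 ≤ k) :
    (k • (A - A)).card ≤ (6 * k) ^ m * A.card := by
  obtain ⟨T, -, hT, hcov⟩ := hA.exists_cover
  obtain ⟨k, rfl⟩ := Nat.exists_eq_add_of_le' hk
  calc ((k + 1) • (A - A)).card ≤ (k • (T - T) + (A - A)).card :=
        Finset.card_le_card (succ_nsmul_subset_of_add_subset (sub_add_sub_subset_of_cover hcov) k)
    _ ≤ (k • (T - T)).card * (A - A).card := Finset.card_add_le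
    _ ≤ (2 * k + 1) ^ m * (2 ^ m * A.card) :=
        Nat.mul_le_mul ((card_nsmul_sub_self_le T k).trans (Nat.pow_le_pow_right (by omega) hT))
          hA.card_sub_le
    _ = (2 * (2 * k + 1)) ^ m * A.card := by rw [mul_pow 2]; ring
    _ ≤ (6 * (k + 1)) ^ m * A.card :=
        Nat.mul_le_mul_right _ (Nat.pow_le_pow_left (by omega) m)

theorem image (hA : HasCoveringDim A m) (φ : G →+ G') (hφ : Set.InjOn φ A) :
    HasCoveringDim (A.image φ) m where
  zero_mem := Finset.mem_image.2 ⟨0, hA.zero_mem, map_zero φ⟩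
  exists_cover := by
    obtain ⟨T, hTA, hT, hcov⟩ := hA.exists_cover
    refine ⟨T.image φ, ?_, Finset.card_image_le.trans hT, ?_⟩
    · simpa only [Finset.image_add, image_sub_distrib] using Finset.image_subset_image (f := φ) hTA
    · simpa only [Finset.image_add, image_sub_distrib] using Finset.image_subset_image (f := φ) hcov
  card_sub_le := by
    rw [← image_sub_distrib, Finset.card_image_of_injOn hφ]
    exact Finset.card_image_le.trans hA.card_sub_le

theorem of_image {φ : G →+ G'} (hφ : Function.Injective φ) (hA : HasCoveringDim (A.image φ) m) :
    HasCoveringDim A m where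
  zero_mem := by
    obtain ⟨x, hx, hx0⟩ := Finset.mem_image.1 hA.zero_mem
    rwa [(map_eq_zero_iff φ hφ).1 hx0] at hx
  exists_cover := by
    obtain ⟨T, hTA, hT, hcov⟩ := hA.exists_cover
    rw [← Finset.image_add, ← image_sub_distrib] at hTA
    obtain ⟨T, hTA', rfl⟩ := Finset.subset_image_iff.1 hTA
    rw [← Finset.image_add, ← image_sub_distrib, ← image_sub_distrib, ← Finset.image_add,
      Finset.image_subset_image_iff hφ] at hcov
    rw [Finset.card_image_of_injective _ hφ] at hT
    exact ⟨T, by exact_mod_cast hTA', hT, hcov⟩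
  card_sub_le := by
    have h := hA.card_sub_le
    rwa [← image_sub_distrib, Finset.card_image_of_injective _ hφ,
      Finset.card_image_of_injective _ hφ] at h

end HasCoveringDim

theorem card_nsmul_sub_nsmul_le_of_doubling (hA : A.Nonempty)
    (hAK : ((A + A).card : ℝ) ≤ K * A.card) (m n : ℕ) :
    ((m • A - n • A).card : ℝ) ≤ K ^ (m + n) * A.card := by
  have hpos : (0 : ℝ) < A.card := by exact_mod_cast hA.card_pos
  calc ((m • A - n • A).card : ℝ) ≤ ((A + A).card / A.card) ^ (m + n) * A.card := by
        have h := (NNRat.cast_le (K := ℝ)).2 <|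
          Finset.pluennecke_ruzsa_inequality_nsmul_sub_nsmul_add hA A m n
        push_cast at h
        exact h
    _ ≤ K ^ (m + n) * A.card := by
        gcongr
        exact (div_le_iff₀ hpos).2 hAK

theorem one_le_of_card_add_le (hA : A.Nonempty) (hAK : ((A + A).card : ℝ) ≤ K * A.card) :
    1 ≤ K := by
  have hpos : (0 : ℝ) < A.card := by exact_mod_cast hA.card_pos
  have hle : (A.card : ℝ) ≤ (A + A).card := by exact_mod_cast Finset.card_le_card_add_left hA
  exact le_of_mul_le_mul_right ((one_mul _).trans_le (hle.trans hAK)) hpos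

theorem hasCoveringDim_of_doubling (h0 : 0 ∈ A) (hAK : ((A + A).card : ℝ) ≤ K * A.card) :
    HasCoveringDim A ⌊K ^ 4⌋₊ := by
  have hA : A.Nonempty := ⟨0, h0⟩
  have hK := one_le_of_card_add_le hA hAK
  refine ⟨h0, ?_, ?_⟩
  · have hcard : ((A + A - A + A).card : ℝ) ≤ K ^ 4 * A.card := by
      have h := card_nsmul_sub_nsmul_le_of_doubling hA hAK 3 1
      rwa [one_nsmul, succ_nsmul, two_nsmul, ← sub_add_eq_add_sub] at h
    obtain ⟨T, hTA, hT, hcov⟩ := Finset.ruzsa_covering_add hA hcard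
    exact ⟨T, hTA, Nat.le_floor hT, hcov⟩
  · have hpow : K ^ 2 ≤ 2 ^ ⌊K ^ 4⌋₊ := by
      have h : ((⌊K ^ 4⌋₊ : ℕ) : ℝ) + 1 ≤ 2 ^ ⌊K ^ 4⌋₊ := by exact_mod_cast Nat.lt_two_pow_self
      exact (pow_le_pow_right₀ hK (by norm_num)).trans ((Nat.lt_floor_add_one (K ^ 4)).le.trans h)
    have hcard : ((A - A).card : ℝ) ≤ K ^ 2 * A.card := by
      simpa using card_nsmul_sub_nsmul_le_of_doubling hA hAK 1 1
    exact_mod_cast hcard.trans (mul_le_mul_of_nonneg_right hpow (Nat.cast_nonneg _))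

end CoveringDim

section Phase

theorem eq_zero_of_exp_mul_I_eq_one {x : ℝ} (h : Complex.exp (x * Complex.I) = 1)
    (hx : |x| < 2 * Real.pi) : x = 0 := by
  obtain ⟨n, hn⟩ := Complex.exp_eq_one_iff.1 h
  have hxn : x = n * (2 * Real.pi) := by
    rw [← mul_assoc] at hn
    exact_mod_cast mul_right_cancel₀ Complex.I_ne_zero hn
  have hn1 : |(n : ℝ)| < 1 := by
    rw [hxn, abs_mul, abs_of_pos Real.two_pi_pos] at hx
    exact (mul_lt_iff_lt_one_left Real.two_pi_pos).1 hx
  have hn0 : n = 0 := Int.abs_lt_one_iff.1 (by exact_mod_cast hn1)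
  simp [hxn, hn0]

variable {G ι : Type*} [AddCommGroup G] (γ : ι → AddChar G ℂ)

/-- The Bohr set of radius `r` of a family of characters. -/
def bohrSet (r : ℝ) : Set G := {a | ∀ i, ‖1 - γ i a‖ ≤ r}

/-- The common kernel of a family of characters. -/
def charKernel : AddSubgroup G where
  carrier := {a | ∀ i, γ i a = 1}
  zero_mem' i := AddChar.map_zero_eq_one _
  add_mem' ha hb i := by rw [AddChar.map_add_eq_mul, ha i, hb i, one_mul]
  neg_mem' ha i := by rw [AddChar.map_neg_eq_inv, ha i, inv_one]

/-- The vectors `x` of angles for which some element of the group has the values `exp (i x)` at a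
family of characters. It contains the lattice `(2 * π * ℤ) ^ ι`. -/
def phaseSubgroup : AddSubgroup (ι → ℝ) where
  carrier := {x | ∃ a, ∀ i, Complex.exp (x i * Complex.I) = γ i a}
  zero_mem' := ⟨0, fun i => by simp⟩
  add_mem' := fun {x y} ⟨a, ha⟩ ⟨b, hb⟩ => ⟨a + b, fun i => by
    simp [add_mul, Complex.exp_add, ha i, hb i, AddChar.map_add_eq_mul]⟩
  neg_mem' := fun {x} ⟨a, ha⟩ => ⟨-a, fun i => by
    simp [Complex.exp_neg, ha i, AddChar.map_neg_eq_inv]⟩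

/-- The vector of arguments in `(-π, π]` of the values at `a` of a family of characters. -/
noncomputable def phase (a : G) : ι → ℝ := fun i => (γ i a).arg

theorem phase_zero : phase γ 0 = 0 := by
  funext i
  simp [phase]

variable {γ}

theorem phase_eq_of_exp_eq {x : ι → ℝ} {a : G} (hx : ∀ i, |x i| < Real.pi)
    (h : ∀ i, Complex.exp (x i * Complex.I) = γ i a) : phase γ a = x := by
  funext i
  have hi := abs_lt.1 (hx i)
  rw [phase, ← h i, Complex.arg_exp_mul_I, toIocMod_eq_self]
  constructor <;> linarith

theorem exp_sum_smul_eq {n : ℕ} {f : Fin n → ι → ℝ} {p : Fin n → G}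
    (hf : ∀ j i, Complex.exp (f j i * Complex.I) = γ i (p j)) {h : G} (hh : h ∈ charKernel γ)
    (c : Fin n → ℕ) (i : ι) :
    Complex.exp ((∑ j, c j • f j) i * Complex.I) = γ i (h + ∑ j, c j • p j) := by
  have hprod : γ i (∑ j, c j • p j) = ∏ j, γ i (p j) ^ c j := by
    simp_rw [← AddChar.map_nsmul_eq_pow]
    exact map_prod (γ i).toMonoidHom (fun j => Multiplicative.ofAdd (c j • p j)) Finset.univ
  rw [AddChar.map_add_eq_mul, hh i, one_mul, hprod]
  simp [Finset.sum_mul, Complex.exp_sum, mul_assoc, Complex.exp_nat_mul, hf]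

variable [Finite G] (γ)

theorem exp_phase (a : G) (i : ι) : Complex.exp (phase γ a i * Complex.I) = γ i a := by
  simpa [phase, AddChar.norm_apply] using Complex.norm_mul_exp_arg_mul_I (γ i a)

theorem abs_phase_le (a : G) (i : ι) : |phase γ a i| ≤ Real.pi / 2 * ‖1 - γ i a‖ := by
  have hne : γ i a ≠ 0 := by simp [← norm_ne_zero_iff, AddChar.norm_apply]
  rw [phase, ← Complex.angle_one_left hne]
  exact Complex.angle_le_mul_norm_sub norm_one (AddChar.norm_apply _ _)

theorem norm_one_sub_le_abs_phase (a : G) (i : ι) : ‖1 - γ i a‖ ≤ |phase γ a i| := by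
  rw [← exp_phase, norm_sub_rev, mul_comm]
  exact Real.norm_exp_I_mul_ofReal_sub_one_le

theorem phase_mem_phaseSubgroup (a : G) : phase γ a ∈ phaseSubgroup γ := ⟨a, exp_phase γ a⟩

theorem exp_sum_phase (s : Multiset G) (i : ι) :
    Complex.exp ((s.map (phase γ)).sum i * Complex.I) = γ i s.sum := by
  induction s using Multiset.induction with
  | empty => simp
  | cons a s ih => simp [add_mul, Complex.exp_add, ih, exp_phase, AddChar.map_add_eq_mul]

variable {γ}

theorem isAddFreimanHom_phase {n : ℕ} {A : Set G} {r : ℝ} (hA : ∀ a ∈ A, ∀ i, |phase γ a i| ≤ r)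
    (hr : n * r < Real.pi) : IsAddFreimanHom n A Set.univ (phase γ) where
  mapsTo := Set.mapsTo_univ _ _
  map_sum_eq_map_sum s t hs ht hsn htn hst := by
    have hbound {s : Multiset G} (hs : ∀ ⦃x⦄, x ∈ s → x ∈ A) (i : ι) :
        |(s.map (phase γ)).sum i| ≤ s.card * r := by
      induction s using Multiset.induction with
      | empty => simp
      | cons a s ih =>
        have ha := hA a (hs (Multiset.mem_cons_self a s)) i
        have hs := ih fun x hx => hs (Multiset.mem_cons_of_mem hx)
        simp only [Multiset.map_cons, Multiset.sum_cons, Pi.add_apply, Multiset.card_cons]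
        push_cast
        linarith [abs_add_le (phase γ a i) ((s.map (phase γ)).sum i)]
    funext i
    refine sub_eq_zero.1 (eq_zero_of_exp_mul_I_eq_one ?_ ?_)
    · rw [Complex.ofReal_sub, sub_mul, Complex.exp_sub, exp_sum_phase, exp_sum_phase, hst,
        ← exp_sum_phase, div_self (Complex.exp_ne_zero _)]
    · have hs := hsn ▸ hbound hs i
      have ht := htn ▸ hbound ht i
      linarith [abs_sub ((s.map (phase γ)).sum i) ((t.map (phase γ)).sum i)]

theorem card_le_card_charKernel_mul (A : Finset G) :
    A.card ≤ Nat.card (charKernel γ) * (phase γ '' A).ncard := by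
  classical
  rw [← Finset.coe_image, Set.ncard_coe_finset]
  refine Finset.card_le_mul_card_image A _ fun v hv => ?_
  obtain ⟨a₀, -, rfl⟩ := Finset.mem_image.1 hv
  rw [← Set.ncard_coe_finset]
  refine Set.ncard_le_ncard_of_injOn (t := charKernel γ) (· - a₀) ?_
    sub_left_injective.injOn (Set.toFinite _)
  intro a ha i
  have ha := congrFun (Finset.mem_filter.1 ha).2 i
  rw [AddChar.map_sub_eq_div, ← exp_phase, ← exp_phase, ha, div_self (Complex.exp_ne_zero _)]

end Phase

section FreimanDimension

theorem eq_zero_of_add_sub_subset {V : Type*} [AddCommGroup V] [IsAddTorsionFree V]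
    [DecidableEq V] {F : Finset V} (h0 : 0 ∈ F) (hF : F + F - F ⊆ F - F) {f : V} (hf : f ∈ F) :
    f = 0 := by
  have hmul (k : ℕ) : k • f ∈ F - F := by
    induction k with
    | zero => simpa using Finset.sub_mem_sub h0 h0
    | succ k ih =>
      obtain ⟨x, hx, y, hy, hxy⟩ := Finset.mem_sub.1 ih
      rw [succ_nsmul', ← hxy, ← add_sub_assoc]
      exact hF (Finset.sub_mem_sub (Finset.add_mem_add hf hx) hy)
  refine (isOfFinAddOrder_iff_eq_zero f).1
    (finite_multiples.1 ((F - F).finite_toSet.subset ?_))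
  rintro _ ⟨k, rfl⟩
  exact hmul k

variable {G V : Type*} [AddCommGroup G] [AddCommGroup V] [DecidableEq G]
  {A T : Finset G} {φ : G → V}

theorem exists_lift_of_isAddFreimanHom (hφ : IsAddFreimanHom 4 (A : Set G) Set.univ φ)
    (hTA : T ⊆ A + A - A) (hcov : A + A - A ⊆ T + (A - A)) :
    ∃ τ : G → V, ∀ a₁ ∈ A, ∀ a₂ ∈ A, ∀ a₃ ∈ A, ∃ t ∈ T, ∃ a₄ ∈ A, ∃ a₅ ∈ A,
      φ a₁ + φ a₂ - φ a₃ = τ t + (φ a₄ - φ a₅) := by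
  have hrep (t : T) : ∃ b₁ ∈ A, ∃ b₂ ∈ A, ∃ b₃ ∈ A, b₁ + b₂ - b₃ = (t : G) := by
    simpa [Finset.mem_sub, Finset.mem_add] using hTA t.2
  choose b₁ hb₁ b₂ hb₂ b₃ hb₃ hb using hrep
  refine ⟨fun t => if ht : t ∈ T then φ (b₁ ⟨t, ht⟩) + φ (b₂ ⟨t, ht⟩) - φ (b₃ ⟨t, ht⟩) else 0,
    fun a₁ h₁ a₂ h₂ a₃ h₃ => ?_⟩
  obtain ⟨t, ht, r, hr, htr⟩ := Finset.mem_add.1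
    (hcov (Finset.sub_mem_sub (Finset.add_mem_add h₁ h₂) h₃))
  obtain ⟨a₄, h₄, a₅, h₅, rfl⟩ := Finset.mem_sub.1 hr
  refine ⟨t, ht, a₄, h₄, a₅, h₅, ?_⟩
  have hsum : a₁ + a₂ + b₃ ⟨t, ht⟩ + a₅ = b₁ ⟨t, ht⟩ + b₂ ⟨t, ht⟩ + a₃ + a₄ := by
    have hbt := hb ⟨t, ht⟩
    grind
  have hφsum := hφ.map_sum_eq_map_sum (s := {a₁, a₂, b₃ ⟨t, ht⟩, a₅})
    (t := {b₁ ⟨t, ht⟩, b₂ ⟨t, ht⟩, a₃, a₄}) (by simp [*]) (by simp [*]) rfl rfl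
    (by simpa [add_assoc] using hsum)
  simp only [Multiset.insert_eq_cons, Multiset.map_cons, Multiset.map_singleton,
    Multiset.sum_cons, Multiset.sum_singleton] at hφsum
  simp only [dif_pos ht]
  grind

theorem finrank_span_image_le_card {𝕜 : Type*} [DivisionRing 𝕜] [CharZero 𝕜] [Module 𝕜 V]
    (hφ : IsAddFreimanHom 4 (A : Set G) Set.univ φ) (hφ0 : φ 0 = 0) (h0 : 0 ∈ A)
    (hTA : T ⊆ A + A - A) (hcov : A + A - A ⊆ T + (A - A)) :
    Module.finrank 𝕜 (Submodule.span 𝕜 (φ '' A)) ≤ T.card := by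
  classical
  obtain ⟨τ, hτ⟩ := exists_lift_of_isAddFreimanHom hφ hTA hcov
  let W : Submodule 𝕜 V := Submodule.span 𝕜 (T.image τ : Finset V)
  have hFF : A.image (W.mkQ ∘ φ) + A.image (W.mkQ ∘ φ) - A.image (W.mkQ ∘ φ) ⊆
      A.image (W.mkQ ∘ φ) - A.image (W.mkQ ∘ φ) := by
    rintro v hv
    simp only [Finset.mem_sub, Finset.mem_add, Finset.mem_image] at hv
    obtain ⟨_, ⟨_, ⟨a₁, h₁, rfl⟩, _, ⟨a₂, h₂, rfl⟩, rfl⟩, _, ⟨a₃, h₃, rfl⟩, rfl⟩ := hv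
    obtain ⟨t, ht, a₄, h₄, a₅, h₅, hrel⟩ := hτ a₁ h₁ a₂ h₂ a₃ h₃
    have hW : W.mkQ (τ t) = 0 := (Submodule.Quotient.mk_eq_zero W).2
      (Submodule.subset_span (Finset.mem_coe.2 (Finset.mem_image_of_mem τ ht)))
    have hq : W.mkQ (φ a₁) + W.mkQ (φ a₂) - W.mkQ (φ a₃) = W.mkQ (φ a₄) - W.mkQ (φ a₅) := by
      rw [← map_add, ← map_sub, hrel, map_add, hW, zero_add, map_sub]
    exact hq ▸ Finset.sub_mem_sub (Finset.mem_image_of_mem _ h₄) (Finset.mem_image_of_mem _ h₅)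
  let : Module ℚ (V ⧸ W) := Module.compHom _ (algebraMap ℚ 𝕜)
  have : IsAddTorsionFree (V ⧸ W) := .of_module_rat _
  have hle : Submodule.span 𝕜 (φ '' A) ≤ W := Submodule.span_le.2 <| by
    rintro _ ⟨a, ha, rfl⟩
    refine (Submodule.Quotient.mk_eq_zero W).1 (eq_zero_of_add_sub_subset
      (Finset.mem_image.2 ⟨0, h0, ?_⟩) hFF (Finset.mem_image_of_mem _ ha))
    rw [Function.comp_apply, hφ0, map_zero]
  calc Module.finrank 𝕜 (Submodule.span 𝕜 (φ '' A)) ≤ Module.finrank 𝕜 W :=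
        Submodule.finrank_mono hle
    _ ≤ (T.image τ).card := finrank_span_finset_le_card _
    _ ≤ T.card := Finset.card_image_le

end FreimanDimension

section BohrSet

variable {G ι : Type*} [AddCommGroup G] [Finite G] [Fintype ι] {γ : ι → AddChar G ℂ}

theorem finite_phaseSubgroup_inter_closedBall {r : ℝ} (hr : r < Real.pi) :
    ((phaseSubgroup γ : Set (ι → ℝ)) ∩ Metric.closedBall 0 r).Finite := by
  refine (Set.finite_range (phase γ)).subset ?_
  rintro x ⟨⟨a, ha⟩, hx⟩
  refine ⟨a, phase_eq_of_exp_eq (fun i => ?_) ha⟩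
  exact ((norm_le_pi_norm x i).trans (mem_closedBall_zero_iff.1 hx)).trans_lt hr

theorem exists_proper_subset_bohrSet {n : ℕ} {f : Fin n → ι → ℝ} (hf : ∀ j, f j ∈ phaseSubgroup γ)
    (hind : LinearIndependent ℝ f) {N : Fin n → ℕ} {r : ℝ} (hr : r < Real.pi)
    (hN : ∀ c ≤ N, ‖∑ j, c j • f j‖ ≤ r) :
    ∃ P : CosetProgression G n, P.IsProper ∧ P.carrier ⊆ bohrSet γ r ∧
      P.size = Nat.card (charKernel γ) * ∏ j, (N j + 1) := by
  choose p hp using hf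
  let P : CosetProgression G n := ⟨charKernel γ, p, N⟩
  have hnorm {c : Fin n → ℕ} (hc : c ≤ N) (i : ι) : |(∑ j, c j • f j) i| ≤ r :=
    (norm_le_pi_norm (∑ j, c j • f j) i).trans (hN c hc)
  have hphase {h : G} (hh : h ∈ charKernel γ) {c : Fin n → ℕ} (hc : c ≤ N) :
      phase γ (P.eval (h, c)) = ∑ j, c j • f j :=
    phase_eq_of_exp_eq (fun i => (hnorm hc i).trans_lt hr) (exp_sum_smul_eq hp hh c)
  refine ⟨P, ?_, ?_, rfl⟩
  · rintro ⟨h, c⟩ ⟨hh, hc⟩ ⟨h', c'⟩ ⟨hh', hc'⟩ heq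
    have hsum : ∑ j, (c j : ℝ) • f j = ∑ j, (c' j : ℝ) • f j := by
      simp_rw [Nat.cast_smul_eq_nsmul]
      rw [← hphase hh hc, ← hphase hh' hc', heq]
    obtain rfl : c = c' := by
      funext j
      exact_mod_cast hind.eq_coords_of_eq hsum j
    simpa [CosetProgression.eval] using heq
  · rintro _ ⟨⟨h, c⟩, ⟨hh, hc⟩, rfl⟩ i
    exact (norm_one_sub_le_abs_phase γ _ i).trans (hphase hh hc ▸ hnorm hc i)

theorem hasLargeCosetProgression_bohrSet_of_finrank_le {A : Finset G} {m : ℕ} (hm : 1 ≤ m) {ρ : ℝ}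
    (hρ0 : 0 < ρ) (hρ : ρ < Real.pi)
    (hdim : Module.finrank ℝ (Submodule.span ℝ (phase γ '' A)) ≤ m)
    (hA : ∀ a ∈ A, ‖phase γ a‖ ≤ ρ / m ^ 2) :
    HasLargeCosetProgression (bohrSet γ ρ) m A.card := by
  let W : Submodule ℝ (ι → ℝ) := Submodule.span ℝ (phase γ '' A)
  let L : AddSubgroup W := (phaseSubgroup γ).comap W.subtype.toAddMonoidHom
  have hfin {r : ℝ} (hr : r < Real.pi) : ((L : Set W) ∩ Metric.closedBall 0 r).Finite := by
    refine ((finite_phaseSubgroup_inter_closedBall (γ := γ) hr).preimage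
      Subtype.val_injective.injOn).subset fun x hx => ⟨hx.1, ?_⟩
    simpa using hx.2
  obtain ⟨n, hn, f, N, hfL, hind, hN, hcard⟩ :=
    exists_progression_of_finite_inter_closedBall hρ0 (hfin hρ) hm hdim
  obtain ⟨P, hP, hPB, hPsize⟩ := exists_proper_subset_bohrSet (γ := γ)
    (f := fun j => (f j : ι → ℝ)) (N := N) hfL
    (hind.map' W.subtype W.ker_subtype) hρ fun c hc => by
      simpa only [W.coe_norm, W.coe_sum, W.coe_smul_of_tower] using hN c hc
  have hphase : phase γ '' A ⊆ W.subtype '' ((L : Set W) ∩ Metric.closedBall 0 (ρ / m ^ 2)) := by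
    rintro _ ⟨a, ha, rfl⟩
    refine ⟨⟨phase γ a, Submodule.subset_span ⟨a, ha, rfl⟩⟩, ⟨phase_mem_phaseSubgroup γ a, ?_⟩, rfl⟩
    simpa using hA a ha
  have hρm : ρ / m ^ 2 < Real.pi := by
    refine (div_le_self hρ0.le ?_).trans_lt hρ
    exact_mod_cast Nat.one_le_pow _ _ hm
  refine ⟨n, hn, P, hP, hPB, ?_⟩
  have hncard : ((phase γ '' A).ncard : ℝ) ≤ (3 * m) ^ m * ∏ j, ((N j : ℝ) + 1) := by
    refine le_trans ?_ hcard
    exact_mod_cast (Set.ncard_le_ncard hphase ((hfin hρm).image _)).trans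
      (Set.ncard_image_le (hfin hρm))
  calc A.card ≤ Nat.card (charKernel γ) * (phase γ '' A).ncard := card_le_card_charKernel_mul A
    _ ≤ Nat.card (charKernel γ) * ((3 * m) ^ m * ∏ j, (N j + 1)) :=
        Nat.mul_le_mul_left _ (by exact_mod_cast hncard)
    _ = (3 * m) ^ m * P.size := by rw [hPsize, mul_left_comm]

end BohrSet

section Fourier

/-- The characters at which the Fourier coefficient of `D` is at least half as large as at the
trivial character. -/
def largeSpectrum {G : Type*} [AddCommGroup G] (D : Finset G) : Set (AddChar G ℂ) :=
  {γ | (D.card : ℝ) / 2 ≤ ‖∑ x ∈ D, γ x‖}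

theorem card_sq_le_card_mul_card_filter_eq {α β : Type*} [DecidableEq β] {P : Finset α}
    {σ : α → β} {E : Finset β} (hE : ∀ p ∈ P, σ p ∈ E) :
    P.card ^ 2 ≤ E.card * ((P ×ˢ P).filter fun pq => σ pq.1 = σ pq.2).card := by
  have hfiber : ((P ×ˢ P).filter fun pq => σ pq.1 = σ pq.2).card =
      ∑ z ∈ E, (P.filter fun p => σ p = z).card ^ 2 := by
    rw [Finset.card_eq_sum_card_fiberwise (f := fun pq => σ pq.1) (t := E)]
    · refine Finset.sum_congr rfl fun z _ => ?_
      rw [sq, ← Finset.card_product]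
      congr 1
      grind
    · exact fun pq hpq => hE _ (Finset.mem_product.1 (Finset.mem_filter.1 hpq).1).1
  rw [hfiber, Finset.card_eq_sum_card_fiberwise (f := σ) (t := E) hE]
  exact sq_sum_le_card_mul_sum_sq

theorem sum_mem_nsmul {G : Type*} [AddCommGroup G] [DecidableEq G] {D : Finset G} {k : ℕ}
    {p : Fin k → G} (hp : ∀ i, p i ∈ D) : ∑ i, p i ∈ k • D := by
  rw [← Finset.mem_coe, Finset.coe_nsmul]
  simpa using Set.finsetSum_mem_finsetSum Finset.univ (fun _ => (D : Set G)) p fun i _ => hp i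

theorem sum_piFinset_char_sum {G : Type*} [AddCommGroup G] (D : Finset G) (k : ℕ)
    (γ : AddChar G ℂ) :
    ∑ p ∈ Fintype.piFinset fun _ : Fin k => D, γ (∑ i, p i) = (∑ x ∈ D, γ x) ^ k := by
  rw [← Fin.prod_const, Finset.prod_univ_sum]
  exact Finset.sum_congr rfl fun p _ =>
    (map_prod γ.toMonoidHom (fun i => Multiplicative.ofAdd (p i)) Finset.univ).symm ▸ rfl

theorem half_norm_pow_sub_le_mul_re {G : Type*} [AddCommGroup G] [Finite G] {γ : AddChar G ℂ}
    {y : G} {F R : ℝ} (hF : 0 ≤ F) (l : ℕ) (hy : R ≤ F → ‖1 - γ y‖ ≤ 1 / 2) :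
    1 / 2 * (F ^ (l + 1)) ^ 2 - 3 / 2 * (R ^ (2 * l) * F ^ 2) ≤ (F ^ (l + 1)) ^ 2 * (γ y).re := by
  have hpow : (F ^ (l + 1)) ^ 2 = F ^ (2 * l) * F ^ 2 := by ring
  rcases le_or_gt R F with hRF | hRF
  · have hre := (Complex.abs_re_le_norm _).trans (hy hRF)
    rw [Complex.sub_re, Complex.one_re] at hre
    have hR : 0 ≤ R ^ (2 * l) * F ^ 2 := by rw [pow_mul]; positivity
    nlinarith [abs_le.1 hre, sq_nonneg (F ^ (l + 1))]
  · have hre : -1 ≤ (γ y).re := by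
      simpa using neg_le_of_abs_le (Complex.abs_re_le_norm (γ y))
    have hle : (F ^ (l + 1)) ^ 2 ≤ R ^ (2 * l) * F ^ 2 := by rw [hpow]; gcongr
    nlinarith [sq_nonneg (F ^ (l + 1))]

variable {G : Type*} [AddCommGroup G]

theorem sum_norm_sq_mul_char [Fintype G] [DecidableEq G] {α : Type*} (P : Finset α)
    (σ : α → G) (y : G) :
    ∑ γ : AddChar G ℂ, ((‖∑ p ∈ P, γ (σ p)‖ ^ 2 : ℝ) : ℂ) * γ y =
      Fintype.card G * ((P ×ˢ P).filter fun pq => σ pq.1 + y = σ pq.2).card := by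
  have hexpand (γ : AddChar G ℂ) : ((‖∑ p ∈ P, γ (σ p)‖ ^ 2 : ℝ) : ℂ) * γ y =
      ∑ pq ∈ P ×ˢ P, γ (σ pq.1 + y - σ pq.2) := by
    rw [Complex.ofReal_pow, ← Complex.mul_conj', map_sum, Finset.sum_mul_sum,
      ← Finset.sum_product', Finset.sum_mul]
    refine Finset.sum_congr rfl fun pq _ => ?_
    rw [sub_eq_add_neg, AddChar.map_add_eq_mul, AddChar.map_add_eq_mul, AddChar.map_neg_eq_conj]
    ring
  simp only [hexpand]
  rw [Finset.sum_comm]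
  simp only [AddChar.sum_apply_eq_ite, sub_eq_zero]
  rw [Finset.card_filter, Nat.cast_sum, Finset.mul_sum]
  refine Finset.sum_congr rfl fun pq _ => ?_
  split_ifs <;> simp

theorem sum_norm_sq_char [Fintype G] [DecidableEq G] {α : Type*} (P : Finset α) (σ : α → G) :
    ∑ γ : AddChar G ℂ, ‖∑ p ∈ P, γ (σ p)‖ ^ 2 =
      (Fintype.card G * ((P ×ˢ P).filter fun pq => σ pq.1 = σ pq.2).card : ℝ) := by
  have h := sum_norm_sq_mul_char P σ 0
  simp only [AddChar.map_zero_eq_one, mul_one, add_zero] at h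
  exact_mod_cast h

theorem sum_norm_sq_sum_char [Fintype G] (D : Finset G) :
    ∑ γ : AddChar G ℂ, ‖∑ x ∈ D, γ x‖ ^ 2 = (Fintype.card G * D.card : ℝ) := by
  classical
  have hdiag : ((D ×ˢ D).filter fun pq => pq.1 = pq.2) = D.diag := by grind
  simpa [hdiag] using sum_norm_sq_char D id

theorem sum_norm_pow_mul_char_re_eq_zero [Finite G] [DecidableEq G] {D : Finset G} {k : ℕ}
    {y : G} (hy : y ∉ k • D - k • D) :
    ∑ γ : AddChar G ℂ, (‖∑ x ∈ D, γ x‖ ^ k) ^ 2 * (γ y).re = 0 := by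
  have := Fintype.ofFinite G
  let P : Finset (Fin k → G) := Fintype.piFinset fun _ => D
  have hempty : ((P ×ˢ P).filter fun pq => ∑ i, pq.1 i + y = ∑ i, pq.2 i) = ∅ := by
    refine Finset.filter_eq_empty_iff.2 fun pq hpq h => hy ?_
    obtain ⟨hp, hq⟩ := Finset.mem_product.1 hpq
    rw [eq_sub_of_add_eq' h]
    exact Finset.sub_mem_sub (sum_mem_nsmul (Fintype.mem_piFinset.1 hq))
      (sum_mem_nsmul (Fintype.mem_piFinset.1 hp))
  have h := congrArg Complex.re (sum_norm_sq_mul_char P (fun p => ∑ i, p i) y)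
  rw [hempty, Complex.re_sum] at h
  simpa only [P, sum_piFinset_char_sum, norm_pow, Complex.re_ofReal_mul, Finset.card_empty,
    Nat.cast_zero, mul_zero, Complex.zero_re] using h

theorem card_mul_card_pow_le_card_nsmul_mul_sum [Fintype G] [DecidableEq G] (D : Finset G)
    (k : ℕ) :
    (Fintype.card G * (D.card ^ k) ^ 2 : ℝ) ≤
      (k • D).card * ∑ γ : AddChar G ℂ, (‖∑ x ∈ D, γ x‖ ^ k) ^ 2 := by
  let P : Finset (Fin k → G) := Fintype.piFinset fun _ => D
  have hcard := card_sq_le_card_mul_card_filter_eq (P := P) (σ := fun p => ∑ i, p i)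
    fun p hp => sum_mem_nsmul (Fintype.mem_piFinset.1 hp)
  have hsum := sum_norm_sq_char P fun p => ∑ i, p i
  have hP : P.card = D.card ^ k := by simp [P]
  simp only [P, sum_piFinset_char_sum, norm_pow] at hsum
  rw [hsum, mul_left_comm]
  rw [hP] at hcard
  gcongr
  exact_mod_cast hcard

theorem subset_bohrSet_largeSpectrum [Finite G] [DecidableEq G] {D B : Finset G} {δ : ℝ}
    (hD : D.Nonempty) (h0 : 0 ∈ B) (hDB : ((D + B).card : ℝ) ≤ (1 + δ) * D.card) :
    (B : Set G) ⊆ bohrSet (fun γ : largeSpectrum D => γ.1) (4 * δ) := by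
  rintro b hb ⟨γ, hγ⟩
  have hbound {E : Finset G} (hE : E ⊆ D + B) (hED : E.card = D.card) :
      ‖∑ x ∈ D + B, γ x - ∑ x ∈ E, γ x‖ ≤ δ * D.card := by
    rw [← Finset.sum_sdiff hE, add_sub_cancel_right]
    refine (norm_sum_le _ _).trans ?_
    simp only [AddChar.norm_apply, Finset.sum_const, nsmul_eq_mul, mul_one]
    rw [Finset.card_sdiff_of_subset hE, Nat.cast_sub (Finset.card_le_card hE), hED]
    linarith
  have hid := hbound (fun x hx => by simpa using Finset.add_mem_add hx h0) rfl
  have htranslate := hbound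
    (Finset.image_subset_iff.2 fun x hx => Finset.add_mem_add hx hb)
    (Finset.card_image_of_injective D (add_left_injective b))
  have hsum : ∑ x ∈ D.image (· + b), γ x = γ b * ∑ x ∈ D, γ x := by
    rw [Finset.sum_image fun _ _ _ _ h => add_left_injective b h, Finset.mul_sum]
    exact Finset.sum_congr rfl fun x _ => by rw [AddChar.map_add_eq_mul, mul_comm]
  have hmul : ‖1 - γ b‖ * ‖∑ x ∈ D, γ x‖ ≤ 2 * δ * D.card :=
    calc ‖1 - γ b‖ * ‖∑ x ∈ D, γ x‖
        = ‖(∑ x ∈ D + B, γ x - ∑ x ∈ D.image (· + b), γ x) -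
            (∑ x ∈ D + B, γ x - ∑ x ∈ D, γ x)‖ := by
          rw [← norm_mul, hsum]; congr 1; ring
      _ ≤ 2 * δ * D.card := (norm_sub_le _ _).trans (by linarith)
  have hDpos : (0 : ℝ) < D.card := by exact_mod_cast hD.card_pos
  have := (mul_le_mul_of_nonneg_left hγ (norm_nonneg (1 - γ b))).trans hmul
  nlinarith

-- Bogolyubov's argument. If `y ∉ (l + 1) • D - (l + 1) • D` then `∑ γ, |D̂ γ| ^ (2 * l + 2) * γ y`
-- vanishes, but the large coefficients contribute positively to this sum and dominate it.
theorem bohrSet_largeSpectrum_subset [Finite G] [DecidableEq G] {D : Finset G} {l : ℕ}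
    (hD : D.Nonempty) (hl : 3 * (((l + 1) • D).card : ℝ) < 4 ^ l * D.card) :
    bohrSet (fun γ : largeSpectrum D => γ.1) (1 / 2) ⊆ ((l + 1) • D - (l + 1) • D : Finset G) := by
  have := Fintype.ofFinite G
  intro y hy
  by_contra hcon
  have : (0 : ℝ) < D.card := by exact_mod_cast hD.card_pos
  have : (0 : ℝ) < Fintype.card G := by exact_mod_cast Fintype.card_pos
  have hsum := Finset.sum_le_sum fun γ (_ : γ ∈ Finset.univ) =>
    half_norm_pow_sub_le_mul_re (norm_nonneg _) l fun hγ => hy ⟨γ, hγ⟩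
  rw [sum_norm_pow_mul_char_re_eq_zero hcon, Finset.sum_sub_distrib, ← Finset.mul_sum,
    ← Finset.mul_sum, ← Finset.mul_sum, sum_norm_sq_sum_char] at hsum
  have hhalf : ((D.card : ℝ) / 2) ^ (2 * l) * 4 ^ l = D.card ^ (2 * l) := by
    rw [div_pow, pow_mul 2 2 l]; norm_num
  have hle : (4 ^ l * D.card : ℝ) * (Fintype.card G * D.card ^ (2 * l + 1)) ≤
      3 * ((l + 1) • D).card * (Fintype.card G * D.card ^ (2 * l + 1)) :=
    calc (4 ^ l * D.card : ℝ) * (Fintype.card G * D.card ^ (2 * l + 1))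
        = 4 ^ l * (Fintype.card G * (D.card ^ (l + 1)) ^ 2) := by ring
      _ ≤ 4 ^ l * (((l + 1) • D).card *
            (3 * ((D.card / 2) ^ (2 * l) * (Fintype.card G * D.card)))) := by
          refine mul_le_mul_of_nonneg_left
            ((card_mul_card_pow_le_card_nsmul_mul_sum D (l + 1)).trans ?_) (by positivity)
          gcongr
          linarith
      _ = 3 * ((l + 1) • D).card * (Fintype.card G *
            ((D.card / 2) ^ (2 * l) * 4 ^ l * D.card)) := by ring
      _ = _ := by rw [hhalf]; ring
  exact hl.not_ge (le_of_mul_le_mul_right hle (by positivity))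

end Fourier

section ResiduallyFinite

variable {G : Type*} [AddCommGroup G]

theorem residuallyFinite_of_fg [AddGroup.FG G] : AddGroup.ResiduallyFinite G := by
  refine AddGroup.residuallyFinite_of_forall_exists_finite_addMonoidHom.{_, 0} fun x hx => ?_
  obtain ⟨n, ι, _, p, hp, e, ⟨f⟩⟩ := AddCommGroup.equiv_free_prod_directSum_zmod G
  have hfx : f x ≠ 0 := (map_ne_zero_iff f f.injective).2 hx
  rcases ne_or_eq (f x).1 0 with hfree | hfree
  · obtain ⟨i, hi⟩ := Finsupp.ne_iff.1 hfree
    refine ⟨ZMod (((f x).1 i).natAbs + 1), inferInstance, inferInstance,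
      ((Int.castAddHom _).comp ((Finsupp.applyAddHom i).comp (AddMonoidHom.fst _ _))).comp
        f.toAddMonoidHom, fun h => hi ?_⟩
    have hdvd : ((((f x).1 i).natAbs + 1 : ℕ) : ℤ) ∣ (f x).1 i :=
      (ZMod.intCast_zmod_eq_zero_iff_dvd _ _).1 h
    exact Int.eq_zero_of_dvd_of_natAbs_lt_natAbs hdvd (by
      rw [Int.natAbs_natCast]
      exact Nat.lt_succ_self _)
  · obtain ⟨i, hi⟩ := DFunLike.ne_iff.1 fun htors : (f x).2 = 0 => hfx (Prod.ext hfree htors)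
    have : NeZero (p i ^ e i) := ⟨pow_ne_zero _ (hp i).ne_zero⟩
    exact ⟨ZMod (p i ^ e i), inferInstance, inferInstance,
      ((DFinsupp.evalAddMonoidHom i).comp (AddMonoidHom.snd _ _)).comp f.toAddMonoidHom, hi⟩

theorem exists_finiteIndex_injOn_mk [AddGroup.ResiduallyFinite G] (F : Finset G) :
    ∃ K : AddSubgroup G, K.FiniteIndex ∧ Set.InjOn (QuotientAddGroup.mk : G → G ⧸ K) F := by
  classical
  have hres : ∀ x : G, x ≠ 0 → ∃ K : AddSubgroup G, K.FiniteIndex ∧ x ∉ K :=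
    AddGroup.residuallyFinite_iff_exists_finiteIndex.1 ‹_›
  choose! K hK hxK using hres
  refine ⟨⨅ x : {x // x ∈ (F - F).erase 0}, K x,
    AddSubgroup.finiteIndex_iInf fun x => hK x (Finset.ne_of_mem_erase x.2), ?_⟩
  intro x hx y hy hxy
  by_contra hne
  rw [QuotientAddGroup.eq, AddSubgroup.mem_iInf] at hxy
  have hmem : -x + y ∈ (F - F).erase 0 := by
    rw [neg_add_eq_sub]
    exact Finset.mem_erase.2 ⟨sub_ne_zero.2 (Ne.symm hne), Finset.sub_mem_sub hy hx⟩
  exact hxK _ (Finset.ne_of_mem_erase hmem) (hxy ⟨_, hmem⟩)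

end ResiduallyFinite

section LargeCosetProgression

theorem exists_small_growth {g : ℕ → ℝ} {a : ℝ} {q s : ℕ} (hq : 0 < q) (ha : 0 ≤ a)
    (h1 : a ≤ g 1) (hg : g (q * s + 1) < 2 ^ s * a) :
    ∃ k, 1 ≤ k ∧ k ≤ q * s ∧ g (k + 1) ≤ (1 + 1 / q) * g k := by
  by_contra! hcon
  have hq' : (0 : ℝ) < q := by exact_mod_cast hq
  have hgrow (k : ℕ) (hk : k ≤ q * s) : (1 + 1 / (q : ℝ)) ^ k * a ≤ g (k + 1) := by
    induction k with
    | zero => simpa using h1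
    | succ k ih =>
      calc (1 + 1 / (q : ℝ)) ^ (k + 1) * a = (1 + 1 / (q : ℝ)) * ((1 + 1 / (q : ℝ)) ^ k * a) := by
            ring
        _ ≤ (1 + 1 / (q : ℝ)) * g (k + 1) := by gcongr; exact ih (by omega)
        _ ≤ g (k + 1 + 1) := (hcon (k + 1) (by omega) hk).le
  have htwo : (2 : ℝ) ≤ (1 + 1 / (q : ℝ)) ^ q := by
    have hbernoulli := one_add_mul_le_pow (a := 1 / (q : ℝ)) (by linarith [one_div_pos.2 hq']) q
    rw [mul_one_div_cancel hq'.ne'] at hbernoulli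
    linarith
  refine hg.not_ge ?_
  calc (2 : ℝ) ^ s * a ≤ ((1 + 1 / (q : ℝ)) ^ q) ^ s * a := by gcongr
    _ = (1 + 1 / (q : ℝ)) ^ (q * s) * a := by rw [pow_mul]
    _ ≤ g (q * s + 1) := hgrow _ le_rfl

theorem six_mul_pow_lt_two_pow {m : ℕ} (hm : 1 ≤ m) :
    (6 * (13 * m ^ 2 * (20 * m ^ 2) + 1)) ^ m < 2 ^ (20 * m ^ 2) := by
  have hm4 : 1 ≤ m ^ 4 := Nat.one_le_pow _ _ hm
  have hbase : 6 * (13 * m ^ 2 * (20 * m ^ 2) + 1) < 2 ^ (20 * m) :=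
    calc 6 * (13 * m ^ 2 * (20 * m ^ 2) + 1) ≤ 1566 * m ^ 4 := by nlinarith
      _ < 2 ^ 16 * m ^ 4 := by omega
      _ ≤ (2 ^ m) ^ 16 * (2 ^ m) ^ 4 := by
          gcongr
          · exact Nat.le_self_pow (by omega) 2
          · exact Nat.lt_two_pow_self.le
      _ = 2 ^ (20 * m) := by rw [← pow_add, ← pow_mul, mul_comm]
  calc (6 * (13 * m ^ 2 * (20 * m ^ 2) + 1)) ^ m < (2 ^ (20 * m)) ^ m :=
        Nat.pow_lt_pow_left hbase (by omega)
    _ = 2 ^ (20 * m ^ 2) := by rw [← pow_mul]; ring_nf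

theorem three_mul_pow_lt_four_pow {m k : ℕ} (hm : 1 ≤ m) (hk : k ≤ 260 * m ^ 4) :
    3 * (6 * ((20 * m ^ 2 + 1) * k)) ^ m < 4 ^ (20 * m ^ 2) := by
  have hm2 : 1 ≤ m ^ 2 := Nat.one_le_pow _ _ hm
  have hm6 : 1 ≤ m ^ 6 := Nat.one_le_pow _ _ hm
  have hbase : 3 * (6 * ((20 * m ^ 2 + 1) * k)) < 2 ^ (40 * m) :=
    calc 3 * (6 * ((20 * m ^ 2 + 1) * k)) ≤ 3 * (6 * ((21 * m ^ 2) * (260 * m ^ 4))) := by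
          gcongr
          omega
      _ = 98280 * m ^ 6 := by ring
      _ < 2 ^ 34 * m ^ 6 := by omega
      _ ≤ (2 ^ m) ^ 34 * (2 ^ m) ^ 6 := by
          gcongr
          · exact Nat.le_self_pow (by omega) 2
          · exact Nat.lt_two_pow_self.le
      _ = 2 ^ (40 * m) := by rw [← pow_add, ← pow_mul, mul_comm]
  calc 3 * (6 * ((20 * m ^ 2 + 1) * k)) ^ m ≤ 3 ^ m * (6 * ((20 * m ^ 2 + 1) * k)) ^ m := by
        gcongr
        exact Nat.le_self_pow (by omega) 3
    _ = (3 * (6 * ((20 * m ^ 2 + 1) * k))) ^ m := (mul_pow _ _ _).symm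
    _ < (2 ^ (40 * m)) ^ m := Nat.pow_lt_pow_left hbase (by omega)
    _ = (2 ^ 2) ^ (20 * m ^ 2) := by rw [← pow_mul, ← pow_mul]; ring_nf
    _ = 4 ^ (20 * m ^ 2) := by norm_num

namespace HasCoveringDim

variable {G : Type*} [AddCommGroup G] [DecidableEq G] {A : Finset G} {m : ℕ}

theorem card_pos (hA : HasCoveringDim A m) : 0 < A.card := Finset.card_pos.2 ⟨0, hA.zero_mem⟩

theorem zero_mem_nsmul_sub (hA : HasCoveringDim A m) (k : ℕ) : 0 ∈ k • (A - A) := by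
  simpa using Finset.nsmul_mem_nsmul (n := k) hA.zero_mem_sub

theorem subset_nsmul_sub (hA : HasCoveringDim A m) {k : ℕ} (hk : 1 ≤ k) : A ⊆ k • (A - A) := by
  simpa using hA.subset_sub.trans <|
    (one_nsmul (A - A)).symm.subset.trans (Finset.nsmul_subset_nsmul_right hA.zero_mem_sub hk)

theorem exists_card_succ_nsmul_sub_le (hA : HasCoveringDim A m) :
    ∃ k, 1 ≤ k ∧ k ≤ 260 * m ^ 4 ∧
      (((k + 1) • (A - A)).card : ℝ) ≤ (1 + 1 / (13 * m ^ 2 : ℕ)) * (k • (A - A)).card := by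
  have hm := hA.one_le
  have hgrowth : (((13 * m ^ 2 * (20 * m ^ 2) + 1) • (A - A)).card : ℝ) <
      2 ^ (20 * m ^ 2) * A.card := by
    exact_mod_cast (hA.card_nsmul_sub_le (Nat.le_add_left _ _)).trans_lt
      (Nat.mul_lt_mul_of_pos_right (six_mul_pow_lt_two_pow hm) hA.card_pos)
  obtain ⟨k, hk1, hk, hkB⟩ := exists_small_growth (g := fun k => ((k • (A - A)).card : ℝ))
    (by positivity) (Nat.cast_nonneg _)
    (by exact_mod_cast Finset.card_le_card (hA.subset_nsmul_sub le_rfl)) hgrowth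
  exact ⟨k, hk1, hk.trans_eq (by ring), hkB⟩

theorem bohrSet_subset_nsmul_sub [Finite G] (hA : HasCoveringDim A m) {k : ℕ} (hk1 : 1 ≤ k)
    (hk : k ≤ 260 * m ^ 4) :
    bohrSet (fun γ : largeSpectrum (k • (A - A)) => γ.1) (1 / 2) ⊆
      ((10920 * m ^ 6) • (A - A) : Finset G) := by
  have hm := hA.one_le
  set l := 20 * m ^ 2
  have hgrowth : 3 * (((l + 1) • k • (A - A)).card : ℝ) < 4 ^ l * (k • (A - A)).card := by
    norm_cast
    calc 3 * ((l + 1) • k • (A - A)).card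
        ≤ 3 * ((6 * ((l + 1) * k)) ^ m * A.card) := by
          rw [← mul_nsmul']
          gcongr
          exact hA.card_nsmul_sub_le (Nat.mul_pos (Nat.succ_pos l) hk1)
      _ = 3 * (6 * ((l + 1) * k)) ^ m * A.card := (mul_assoc _ _ _).symm
      _ < 4 ^ l * A.card :=
          Nat.mul_lt_mul_of_pos_right (three_mul_pow_lt_four_pow hm hk) hA.card_pos
      _ ≤ 4 ^ l * (k • (A - A)).card :=
          Nat.mul_le_mul_left _ (Finset.card_le_card (hA.subset_nsmul_sub hk1))
  have hsym : (l + 1) • k • (A - A) - (l + 1) • k • (A - A) =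
      ((l + 1) * k + (l + 1) * k) • (A - A) := by
    rw [sub_eq_add_neg, ← neg_nsmul, ← neg_nsmul, neg_sub, ← mul_nsmul', ← add_nsmul]
  refine (bohrSet_largeSpectrum_subset ⟨0, hA.zero_mem_nsmul_sub k⟩ hgrowth).trans ?_
  rw [hsym, Finset.coe_subset]
  refine Finset.nsmul_subset_nsmul_right hA.zero_mem_sub ?_
  have hm2 : 1 ≤ m ^ 2 := Nat.one_le_pow _ _ hm
  calc (l + 1) * k + (l + 1) * k
      ≤ (21 * m ^ 2) * (260 * m ^ 4) + (21 * m ^ 2) * (260 * m ^ 4) := by gcongr <;> omega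
    _ = 10920 * m ^ 6 := by ring

theorem hasLargeCosetProgression_bohrSet [Finite G] {ι : Type*} [Finite ι]
    {γ : ι → AddChar G ℂ} (hA : HasCoveringDim A m)
    (hγ : (A : Set G) ⊆ bohrSet γ (4 / (13 * m ^ 2))) :
    HasLargeCosetProgression (bohrSet γ (1 / 2)) m A.card := by
  have := Fintype.ofFinite ι
  have hm := hA.one_le
  have hm2 : (1 : ℝ) ≤ m ^ 2 := by exact_mod_cast Nat.one_le_pow _ _ hm
  have hphase {a : G} (ha : a ∈ A) (i : ι) : |phase γ a i| ≤ 1 / 2 / m ^ 2 :=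
    calc |phase γ a i| ≤ Real.pi / 2 * ‖1 - γ i a‖ := abs_phase_le γ a i
      _ ≤ 3.25 / 2 * (4 / (13 * m ^ 2)) := by
          gcongr
          · linarith [Real.pi_lt_d2]
          · exact hγ ha i
      _ = 1 / 2 / m ^ 2 := by field_simp; norm_num
  have hfreiman : IsAddFreimanHom 4 (A : Set G) Set.univ (phase γ) :=
    isAddFreimanHom_phase (fun a ha i => (hphase ha i).trans (div_le_self (by norm_num) hm2))
      (by linarith [Real.pi_gt_three])
  obtain ⟨T, hTA, hT, hcov⟩ := hA.exists_cover
  exact hasLargeCosetProgression_bohrSet_of_finrank_le hm (by norm_num)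
    (by linarith [Real.pi_gt_three])
    ((finrank_span_image_le_card hfreiman (phase_zero γ) hA.zero_mem hTA hcov).trans hT)
    fun a ha => (pi_norm_le_iff_of_nonneg (by positivity)).2 (hphase ha)

theorem hasLargeCosetProgression_of_finite [Finite G] (hA : HasCoveringDim A m) :
    HasLargeCosetProgression (↑((10920 * m ^ 6) • (A - A)) : Set G) m A.card := by
  obtain ⟨k, hk1, hk, hgrowth⟩ := hA.exists_card_succ_nsmul_sub_le
  rw [succ_nsmul] at hgrowth
  have hbohr := subset_bohrSet_largeSpectrum ⟨0, hA.zero_mem_nsmul_sub k⟩ hA.zero_mem_sub hgrowth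
  refine (hA.hasLargeCosetProgression_bohrSet ?_).mono (hA.bohrSet_subset_nsmul_sub hk1 hk)
  have hδ : 4 / (13 * (m : ℝ) ^ 2) = 4 * (1 / (13 * m ^ 2 : ℕ)) := by push_cast; ring
  exact hδ ▸ (Finset.coe_subset.2 hA.subset_sub).trans hbohr

theorem hasLargeCosetProgression_of_residuallyFinite [AddGroup.ResiduallyFinite G]
    (hA : HasCoveringDim A m) :
    HasLargeCosetProgression (↑((10920 * m ^ 6) • (A - A)) : Set G) m A.card := by
  classical
  set D := (10920 * m ^ 6) • (A - A) with hD
  have h0 : 0 ∈ D := hA.zero_mem_nsmul_sub _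
  have hAD : A ⊆ D := hA.subset_nsmul_sub (Nat.mul_pos (by norm_num) (Nat.pow_pos hA.one_le))
  have hDD : D ⊆ D + D := fun x hx => by simpa using Finset.add_mem_add hx h0
  obtain ⟨K, hK, hinj⟩ := exists_finiteIndex_injOn_mk (D + D)
  let φ : G →+ G ⧸ K := QuotientAddGroup.mk' K
  have hinjD : Set.InjOn φ D := hinj.mono hDD
  have himage :
      (↑((10920 * m ^ 6) • (A.image φ - A.image φ)) : Set (G ⧸ K)) = φ '' D := by
    rw [hD, ← image_sub_distrib, ← Finset.image_nsmul, Finset.coe_image]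
  have hlarge := (hA.image φ (hinjD.mono hAD)).hasLargeCosetProgression_of_finite
  rw [himage] at hlarge
  let ψ := Function.invFunOn φ (D : Set G)
  have hψ : Set.LeftInvOn ψ φ D := hinjD.leftInvOn_invFunOn
  have h := hlarge.image hψ.rightInvOn_image.injOn <| by
    rintro _ ⟨x, hx, rfl⟩ _ ⟨y, hy, rfl⟩ ⟨z, hz, hxy⟩
    rw [← map_add] at hxy ⊢
    rw [← hinj (hDD hz) (Finset.add_mem_add hx hy) hxy, hψ hx, hψ hy, hψ hz]
    exact hinj (hDD hz) (Finset.add_mem_add hx hy) hxy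
  rwa [hψ.image_image, Finset.card_image_of_injOn (hinjD.mono hAD)] at h

theorem hasLargeCosetProgression (hA : HasCoveringDim A m) :
    HasLargeCosetProgression (↑((10920 * m ^ 6) • (A - A)) : Set G) m A.card := by
  classical
  let Q := AddSubgroup.closure (A : Set G)
  have : AddGroup.FG Q := AddGroup.closure_finset_fg A
  have hQ : Function.Injective Q.subtype := Q.subtype_injective
  obtain ⟨A', hA'⟩ : ∃ A' : Finset Q, A'.image Q.subtype = A := by
    refine ⟨A.preimage Q.subtype hQ.injOn, ?_⟩
    rw [Finset.image_preimage]
    exact Finset.filter_true_of_mem fun x hx => ⟨⟨x, AddSubgroup.subset_closure hx⟩, rfl⟩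
  have := residuallyFinite_of_fg (G := Q)
  have h := (of_image hQ (hA' ▸ hA)).hasLargeCosetProgression_of_residuallyFinite.image
    (ψ := Q.subtype) hQ.injOn fun x _ y _ _ => map_add _ x y
  rwa [← Finset.coe_image, Finset.image_nsmul, image_sub_distrib,
    ← Finset.card_image_of_injective A' hQ, hA'] at h

end HasCoveringDim

end LargeCosetProgression

section Covering

variable {G : Type*} [AddCommGroup G] [DecidableEq G] {A B : Finset G} {m n : ℕ}

-- Chang's argument: an element of `A` outside `Q - Q` is added to `Q` as a new step, which doubles
-- the size of `Q`.
theorem CosetProgression.IsProper.exists_extension {P : CosetProgression G n} (hP : P.IsProper)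
    {J : ℕ} (h0 : 0 ∈ B) (hAB : A ⊆ B) (hPJ : P.carrier ⊆ (J • B : Finset G)) (I : ℕ) :
    ∃ i ≤ I, ∃ Q : CosetProgression G (n + i), Q.IsProper ∧
      Q.carrier ⊆ ((J + i) • B : Finset G) ∧ Q.size = 2 ^ i * P.size ∧
      ((A : Set G) ⊆ Q.carrier - Q.carrier ∨ i = I) := by
  induction I with
  | zero => exact ⟨0, le_rfl, P, hP, hPJ, by simp, Or.inr rfl⟩
  | succ I ih =>
    obtain ⟨i, hi, Q, hQ, hQJ, hsize, hor⟩ := ih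
    by_cases hA : (A : Set G) ⊆ Q.carrier - Q.carrier
    · exact ⟨i, hi.trans I.le_succ, Q, hQ, hQJ, hsize, Or.inl hA⟩
    obtain rfl := hor.resolve_left hA
    obtain ⟨a, ha, haQ⟩ := Set.not_subset.1 hA
    have hadd : (((J + i) • B : Finset G) : Set G) + B = ((J + (i + 1)) • B : Finset G) := by
      rw [← add_assoc, succ_nsmul, Finset.coe_add]
    refine ⟨i + 1, le_rfl, Q.cons a, hQ.cons haQ, ?_, ?_, Or.inr rfl⟩
    · exact (carrier_cons_subset h0 (hAB ha)).trans ((Set.add_subset_add_right hQJ).trans hadd.le)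
    · rw [size_cons, hsize, pow_succ']
      exact (mul_assoc _ _ _).symm

theorem pow_growth_lt_two_pow {m L : ℕ} (hm : 1 ≤ m) (hL : m < 2 ^ L) :
    (18 * m * (10920 * m ^ 6 + 40 * m * L)) ^ m < 2 ^ (40 * m * L) := by
  have hL1 : 1 ≤ L := by
    by_contra! hL0
    rw [Nat.lt_one_iff.1 hL0] at hL
    omega
  have hmL : m * L ≤ (2 ^ L) ^ 6 :=
    calc m * L ≤ 2 ^ L * 2 ^ L := Nat.mul_le_mul hL.le Nat.lt_two_pow_self.le
      _ = (2 ^ L) ^ 2 := (sq _).symm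
      _ ≤ (2 ^ L) ^ 6 := Nat.pow_le_pow_right (Nat.two_pow_pos L) (by norm_num)
  have hm6 : m ^ 6 ≤ (2 ^ L) ^ 6 := Nat.pow_le_pow_left hL.le 6
  have hbase : 18 * m * (10920 * m ^ 6 + 40 * m * L) < 2 ^ (40 * L) :=
    calc 18 * m * (10920 * m ^ 6 + 40 * m * L)
        ≤ 18 * 2 ^ L * (10960 * (2 ^ L) ^ 6) :=
          Nat.mul_le_mul (Nat.mul_le_mul_left _ hL.le) (by nlinarith)
      _ = 197280 * (2 ^ L) ^ 7 := by ring
      _ < (2 ^ 1) ^ 33 * (2 ^ L) ^ 7 := Nat.mul_lt_mul_of_pos_right (by norm_num) (by positivity)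
      _ ≤ (2 ^ L) ^ 33 * (2 ^ L) ^ 7 := by gcongr; norm_num
      _ = 2 ^ (40 * L) := by rw [← pow_add, ← pow_mul, mul_comm]
  calc (18 * m * (10920 * m ^ 6 + 40 * m * L)) ^ m < (2 ^ (40 * L)) ^ m :=
        Nat.pow_lt_pow_left hbase (by omega)
    _ = 2 ^ (40 * m * L) := by rw [← pow_mul]; ring_nf

namespace HasCoveringDim

theorem exists_subset_carrier_sub_carrier (hA : HasCoveringDim A m) {L : ℕ} (hL : m < 2 ^ L) :
    ∃ d ≤ m + 40 * m * L, ∃ Q : CosetProgression G d, (Q.subgroup : Set G).Finite ∧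
      (A : Set G) ⊆ Q.carrier - Q.carrier ∧ Q.size ≤ 2 ^ (40 * m * L) * A.card := by
  obtain ⟨n, hn, P, hP, hPJ, hsize⟩ := hA.hasLargeCosetProgression
  have hgrowth := pow_growth_lt_two_pow hA.one_le hL
  set I := 40 * m * L
  set J := 10920 * m ^ 6
  have hJ : 1 ≤ J := Nat.mul_pos (by norm_num) (Nat.pow_pos hA.one_le)
  obtain ⟨i, hi, Q, hQ, hQJ, hQsize, hor⟩ :=
    hP.exists_extension hA.zero_mem_sub hA.subset_sub hPJ I
  have hQfin : (Q.subgroup : Set G).Finite :=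
    (Finset.finite_toSet _).subset (CosetProgression.subgroup_subset_carrier.trans hQJ)
  have hQcard : Q.size ≤ (6 * (J + i)) ^ m * A.card :=
    (hQ.size_le_card hQJ).trans (hA.card_nsmul_sub_le (by omega))
  refine ⟨n + i, by omega, Q, hQfin, hor.resolve_right ?_, hQcard.trans ?_⟩
  · rintro rfl
    have hdouble : Q.size ≤ (18 * m * (J + I)) ^ m * P.size :=
      calc Q.size ≤ (6 * (J + I)) ^ m * ((3 * m) ^ m * P.size) :=
            hQcard.trans (Nat.mul_le_mul_left _ hsize)
        _ = (18 * m * (J + I)) ^ m * P.size := by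
            rw [← mul_assoc, ← mul_pow]
            ring_nf
    have hPpos : 0 < P.size := CosetProgression.size_pos <|
      (Finset.finite_toSet _).subset (CosetProgression.subgroup_subset_carrier.trans hPJ)
    exact (hQsize.ge.trans hdouble).not_gt (Nat.mul_lt_mul_of_pos_right hgrowth hPpos)
  · have hbase : 6 * (J + i) ≤ 18 * m * (J + I) :=
      Nat.mul_le_mul (by linarith [hA.one_le]) (by omega)
    exact Nat.mul_le_mul_right _ ((Nat.pow_le_pow_left hbase m).trans hgrowth.le)

theorem exists_subset_add_sum_progression (hA : HasCoveringDim A m) {L : ℕ} (hL : m < 2 ^ L) :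
    ∃ d ≤ m + 40 * m * L, ∃ (H : AddSubgroup G) (b s : Fin d → G) (len : Fin d → ℕ),
      (H : Set G).Finite ∧ (A : Set G) ⊆ H + ∑ i, progression (b i) (s i) (len i) ∧
      Nat.card H * ∏ i, len i ≤ 2 ^ (m + 80 * m * L) * A.card := by
  obtain ⟨d, hd, Q, hfin, hAQ, hsize⟩ := hA.exists_subset_carrier_sub_carrier hL
  refine ⟨d, hd, Q.subgroup, _, _, _, hfin, hAQ.trans Q.carrier_sub_carrier_subset, ?_⟩
  calc Nat.card Q.subgroup * ∏ j, (2 * Q.bound j + 1) ≤ 2 ^ d * Q.size :=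
        Q.card_mul_prod_two_mul_bound_le
    _ ≤ 2 ^ (m + 40 * m * L) * (2 ^ (40 * m * L) * A.card) :=
        Nat.mul_le_mul (Nat.pow_le_pow_right two_pos hd) hsize
    _ = 2 ^ (m + 80 * m * L) * A.card := by
        rw [← mul_assoc, ← pow_add]
        ring_nf

end HasCoveringDim

end Covering

theorem floor_pow_mul_log_le {K : ℝ} (hK : 1 ≤ K) :
    ((2 * ⌊K ^ 4⌋₊ + 80 * ⌊K ^ 4⌋₊ * (Nat.log 2 ⌊K ^ 4⌋₊ + 1) : ℕ) : ℝ) ≤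
      640 * (K ^ 4 * (1 + Real.log K)) := by
  set m := ⌊K ^ 4⌋₊
  have hmK : (m : ℝ) ≤ K ^ 4 := Nat.floor_le (by positivity)
  have hm0 : m ≠ 0 := (Nat.floor_pos.2 (one_le_pow₀ hK)).ne'
  have hlogK : 0 ≤ Real.log K := Real.log_nonneg hK
  have hlog : (Nat.log 2 m : ℝ) ≤ 6 * Real.log K := by
    have hpow : (2 : ℝ) ^ Nat.log 2 m ≤ K ^ 4 :=
      le_trans (by exact_mod_cast Nat.pow_log_le_self 2 hm0) hmK
    have hle := Real.log_le_log (by positivity) hpow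
    rw [Real.log_pow, Real.log_pow] at hle
    push_cast at hle
    nlinarith [Real.log_two_gt_d9]
  calc ((2 * m + 80 * m * (Nat.log 2 m + 1) : ℕ) : ℝ) = m * (82 + 80 * Nat.log 2 m) := by
        push_cast
        ring
    _ ≤ K ^ 4 * (640 * (1 + Real.log K)) := by
        gcongr
        linarith
    _ = 640 * (K ^ 4 * (1 + Real.log K)) := by ring

theorem two_pow_le_exp {n : ℕ} {x : ℝ} (hn : n ≤ x) : (2 : ℝ) ^ n ≤ Real.exp x :=
  calc (2 : ℝ) ^ n ≤ Real.exp 1 ^ n := by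
        gcongr
        linarith [Real.add_one_le_exp (1 : ℝ)]
    _ = Real.exp n := Real.exp_one_pow n
    _ ≤ Real.exp x := Real.exp_le_exp.2 hn

theorem add_sum_progression_cons {G : Type*} [AddCommGroup G] (S : Set G) (a : G) {d : ℕ}
    (b s : Fin d → G) (len : Fin d → ℕ) :
    S + ∑ i, progression ((Fin.cons a b : Fin (d + 1) → G) i) ((Fin.cons 0 s : Fin (d + 1) → G) i)
        ((Fin.cons 1 len : Fin (d + 1) → ℕ) i) =
      {a} + (S + ∑ i, progression (b i) (s i) (len i)) := by
  have hsingle : progression a 0 1 = {a} := by simp [progression]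
  simp only [Fin.sum_univ_succ, Fin.cons_zero, Fin.cons_succ, hsingle, add_left_comm]

theorem green_ruzsa_freiman_general {G : Type*} [AddCommGroup G] [DecidableEq G] {A : Finset G}
    {K : ℝ} (hA : A.Nonempty) (hAK : ((A + A).card : ℝ) ≤ K * A.card) :
    ∃ (d : ℕ) (H : AddSubgroup G) (b s : Fin d → G) (len : Fin d → ℕ), (H : Set G).Finite ∧
      d ≤ 640 * (K ^ 4 * (1 + Real.log K)) ∧
      (A : Set G) ⊆ H + ∑ i, progression (b i) (s i) (len i) ∧
      (((H : Set G) + ∑ i, progression (b i) (s i) (len i)).ncard : ℝ) ≤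
        Real.exp (640 * (K ^ 4 * (1 + Real.log K))) * A.card := by
  obtain ⟨a, ha⟩ := hA
  have hcard : ({-a} + A).card = A.card := Finset.card_singleton_add _ _
  have h0 : 0 ∈ {-a} + A :=
    Finset.mem_add.2 ⟨-a, Finset.mem_singleton_self _, a, ha, neg_add_cancel a⟩
  have hdoubling : (({-a} + A + ({-a} + A)).card : ℝ) ≤ K * ({-a} + A).card := by
    rwa [hcard, add_add_add_comm, Finset.singleton_add_singleton, Finset.card_singleton_add]
  have hcov := hasCoveringDim_of_doubling h0 hdoubling
  have hbound := floor_pow_mul_log_le (one_le_of_card_add_le ⟨a, ha⟩ hAK)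
  set m := ⌊K ^ 4⌋₊
  set L := Nat.log 2 m + 1
  have hm := hcov.one_le
  obtain ⟨d, hd, H, b, s, len, hH, hsub, hsize⟩ :=
    hcov.exists_subset_add_sum_progression (L := L) (Nat.lt_pow_succ_log_self one_lt_two m)
  refine ⟨d + 1, H, Fin.cons a b, Fin.cons 0 s, Fin.cons 1 len, hH, ?_, ?_, ?_⟩
  · exact le_trans (Nat.cast_le.2 (by nlinarith)) hbound
  · rw [add_sum_progression_cons]
    rw [Finset.coe_add, Finset.coe_singleton] at hsub
    simpa only [← add_assoc, Set.singleton_add_singleton, add_neg_cancel, Set.singleton_zero,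
      zero_add] using Set.add_subset_add_left (s := {a}) hsub
  · have hncard := ncard_add_sum_progression_le H (Fin.cons a b : Fin (d + 1) → G) (Fin.cons 0 s)
      (Fin.cons 1 len)
    simp only [Fin.prod_univ_succ, Fin.cons_zero, Fin.cons_succ, one_mul] at hncard
    rw [hcard] at hsize
    calc _ ≤ ((2 ^ (m + 80 * m * L) * A.card : ℕ) : ℝ) := Nat.cast_le.2 (hncard.trans hsize)
      _ ≤ Real.exp (640 * (K ^ 4 * (1 + Real.log K))) * A.card := by
          push_cast
          gcongr
          exact two_pow_le_exp (le_trans (Nat.cast_le.2 (by omega)) hbound)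

theorem pow_mul_one_add_log_le {K ε : ℝ} (hK : 1 ≤ K) (hε : 0 < ε) :
    K ^ 4 * (1 + Real.log K) ≤ (1 + 1 / ε) * K ^ (4 + ε) :=
  calc K ^ 4 * (1 + Real.log K) ≤ K ^ 4 * (K ^ ε + K ^ ε / ε) := by
        gcongr
        · exact Real.one_le_rpow hK hε.le
        · exact Real.log_le_rpow_div (by linarith) hε
    _ = (1 + 1 / ε) * K ^ (4 + ε) := by
        rw [Real.rpow_add (by linarith)]
        norm_cast
        ring

theorem green_ruzsa_freiman (ε : ℝ) (hε : 0 < ε) :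
    ∃ C : ℝ, 0 < C ∧
      ∀ (G : Type) [AddCommGroup G] [DecidableEq G] (A : Finset G) (K : ℝ),
        A.Nonempty → 1 ≤ K → ((A + A).card : ℝ) ≤ K * A.card →
        ∃ (d : ℕ) (H : AddSubgroup G) (b s : Fin d → G) (len : Fin d → ℕ)
          (M : Set G),
          (H : Set G).Finite ∧
          (d : ℝ) ≤ C * K ^ (4 + ε) ∧
          M = (H : Set G) +
              (∑ i : Fin d, {y : G | ∃ j : ℕ, j < len i ∧ y = b i + j • s i}) ∧
          (↑A : Set G) ⊆ M ∧
          (M.ncard : ℝ) ≤ Real.exp (C * K ^ (4 + ε)) * A.card := by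
  refine ⟨640 * (1 + 1 / ε), by positivity, fun G _ _ A K hA hK hAK => ?_⟩
  obtain ⟨d, H, b, s, len, hH, hd, hAM, hM⟩ := green_ruzsa_freiman_general hA hAK
  have hexp : 640 * (K ^ 4 * (1 + Real.log K)) ≤ 640 * (1 + 1 / ε) * K ^ (4 + ε) := by
    linarith [pow_mul_one_add_log_le hK hε]
  exact ⟨d, H, b, s, len, _, hH, hd.trans hexp, rfl, hAM,
    hM.trans (mul_le_mul_of_nonneg_right (Real.exp_le_exp.2 hexp) (Nat.cast_nonneg _))⟩
end

section
/- For every finite field F and every integer r ≥ 3 there is a constant C = C(|F|, r) > 0 such that for every n ≥ 1 the following holds: if a₁, …, a_r ∈ F∖{0} satisfy a₁ + ⋯ + a_r = 0 and A ⊆ F^n contains no solution to a₁·x₁ + ⋯ + a_r·x_r = 0 with x₁, …, x_r ∈ A pairwise distinct, then |A| ≤ C·|F|^n / n^{r−2}. -/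
/-!
Let `A ⊆ V` have no solution in pairwise distinct elements, where `dim V = m + 1`, and suppose
that every such set in dimension `m` has density at most `u`. The number of solutions in `A` is
`|V|⁻¹ ∑ φ, ∏ i, Â(a i • φ)`, the sum being over the functionals `φ` on `V`; its term at `φ = 0`
is `|V|⁻¹ |A| ^ r`. Every solution in `A` has a repeated coordinate, so there are few of them. A
fibre of `φ ≠ 0` translates into `ker φ`, where it still has no distinct solution because the
coefficients have sum zero; hence no fibre has density above `u`, which forces
`|Â(φ)| ≤ (u - δ) |V|` for the density `δ` of `A`. Applying this to `r - 2` of the factors and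
Parseval's identity to the other two gives
`δ ^ r ≤ r ^ 2 / |V| * δ ^ (r - 2) + (u - δ) ^ (r - 2) * δ`, and for `u = C / m ^ (r - 2)` with `C`
large this is possible only if `δ ≤ C / (m + 1) ^ (r - 2)`.
-/

open Finset Module

section Solutions

variable {ι R M : Type*} [Fintype ι]

/-- `A` contains no solution to `∑ i, a i • x i = 0` in pairwise distinct elements. -/
def DistinctSolutionFree [SMul R M] [AddCommMonoid M] (a : ι → R) (A : Finset M) : Prop :=
  ¬ ∃ x : ι → M, (∀ i, x i ∈ A) ∧ Function.Injective x ∧ ∑ i, a i • x i = 0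

/-- The solutions to `∑ i, a i • x i = 0` in `A`, with repeated coordinates allowed. -/
def solutions [DecidableEq ι] [DecidableEq M] [SMul R M] [AddCommMonoid M] (a : ι → R)
    (A : Finset M) : Finset (ι → M) :=
  {x ∈ Fintype.piFinset fun _ => A | ∑ i, a i • x i = 0}

theorem eq_of_sum_smul_eq_of_forall_ne [SMul R M] [AddCancelCommMonoid M] {a : ι → R} {l : ι}
    (hl : IsSMulRegular M (a l)) {x y : ι → M} (hsum : ∑ i, a i • x i = ∑ i, a i • y i)
    (hxy : ∀ i, i ≠ l → x i = y i) : x = y := by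
  classical
  rw [← add_sum_erase _ _ (mem_univ l), ← add_sum_erase _ _ (mem_univ l),
    sum_congr rfl fun i hi => by rw [hxy i (ne_of_mem_erase hi)]] at hsum
  have hxyl : x l = y l := hl (add_right_cancel hsum)
  funext i
  obtain rfl | hi := eq_or_ne i l
  exacts [hxyl, hxy i hi]

section

variable [DecidableEq ι] [DecidableEq M] [SMul R M] [AddCancelCommMonoid M] {k : ℕ}
  {a : ι → R} {A : Finset M}

theorem card_solutions_filter_apply_eq_le (hk : 1 ≤ k) (hι : Fintype.card ι = k + 2)
    (ha : ∀ i, IsSMulRegular M (a i)) {i j : ι} (hij : i ≠ j) :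
    #{x ∈ solutions a A | x i = x j} ≤ #A ^ k := by
  obtain ⟨l, -, hl⟩ : ∃ l ∈ univ, l ∉ ({i, j} : Finset ι) :=
    exists_mem_notMem_of_card_lt_card (by rw [card_pair hij, card_univ]; omega)
  obtain ⟨hli, hlj⟩ : l ≠ i ∧ l ≠ j := by simpa using hl
  -- Such a solution is determined by its coordinates other than `j` and `l`.
  let s : Finset ι := univ \ {j, l}
  have hs : #s = k := by
    rw [card_sdiff_of_subset (subset_univ _), card_univ, hι, card_pair hlj.symm, Nat.add_sub_cancel]
  calc #{x ∈ solutions a A | x i = x j}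
      ≤ #(Fintype.piFinset fun _ : s => A) := by
        refine card_le_card_of_injOn (fun x m => x m) (fun x hx => ?_) fun x hx y hy hxy => ?_
        · simp only [solutions, coe_filter, mem_filter, Fintype.mem_piFinset,
            Set.mem_ofPred_eq] at hx
          simpa using fun m _ => hx.1.1 m
        · simp only [solutions, coe_filter, mem_filter, Set.mem_ofPred_eq] at hx hy
          have hs_eq : ∀ m, m ≠ j → m ≠ l → x m = y m := fun m hmj hml =>
            congrFun hxy ⟨m, by simp [s, hmj, hml]⟩
          refine eq_of_sum_smul_eq_of_forall_ne (ha l) (hx.1.2.trans hy.1.2.symm) fun m hml => ?_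
          obtain rfl | hmj := eq_or_ne m j
          · rw [← hx.2, ← hy.2, hs_eq i hij hli.symm]
          · exact hs_eq m hmj hml
    _ = #A ^ k := by simp [hs]

theorem DistinctSolutionFree.card_solutions_le (hk : 1 ≤ k) (hι : Fintype.card ι = k + 2)
    (ha : ∀ i, IsSMulRegular M (a i)) (hA : DistinctSolutionFree a A) :
    #(solutions a A) ≤ (k + 2) ^ 2 * #A ^ k := by
  have hsub : solutions a A ⊆
      (univ : Finset ι).offDiag.biUnion fun p => {x ∈ solutions a A | x p.1 = x p.2} := by
    intro x hx
    have hxA := mem_filter.1 hx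
    have hx_inj : ¬ Function.Injective x := fun h => hA ⟨x, Fintype.mem_piFinset.1 hxA.1, h, hxA.2⟩
    obtain ⟨i, j, hxij, hij⟩ := Function.not_injective_iff.1 hx_inj
    simp only [mem_biUnion, mem_offDiag, mem_univ, true_and, mem_filter]
    exact ⟨(i, j), hij, hx, hxij⟩
  calc #(solutions a A) ≤ #(univ : Finset ι).offDiag * #A ^ k :=
        (card_le_card hsub).trans <| card_biUnion_le_card_mul _ _ _ fun p hp =>
          card_solutions_filter_apply_eq_le hk hι ha (mem_offDiag.1 hp).2.2
    _ ≤ (k + 2) ^ 2 * #A ^ k := by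
        gcongr
        rw [offDiag_card, card_univ, hι, sq]
        exact Nat.sub_le _ _

end

section Module

variable [Ring R] [AddCommGroup M] [Module R M] {a : ι → R} {A : Finset M}

theorem DistinctSolutionFree.of_forall_add_mem {M' : Type*} [AddCommGroup M'] [Module R M']
    (hA : DistinctSolutionFree a A) (ha : ∑ i, a i = 0) {f : M' →ₗ[R] M}
    (hf : Function.Injective f) (v : M) {B : Finset M'} (hB : ∀ y ∈ B, f y + v ∈ A) :
    DistinctSolutionFree a B := by
  rintro ⟨x, hxB, hx_inj, hx⟩
  refine hA ⟨fun i => f (x i) + v, fun i => hB _ (hxB i),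
    (add_left_injective v).comp (hf.comp hx_inj), ?_⟩
  calc ∑ i, a i • (f (x i) + v) = f (∑ i, a i • x i) + (∑ i, a i) • v := by
        simp only [smul_add, sum_add_distrib, map_sum, map_smul, sum_smul]
    _ = 0 := by rw [hx, ha, map_zero, zero_smul, add_zero]

theorem DistinctSolutionFree.exists_ker_card_eq {N : Type*} [AddCommGroup N] [Module R N]
    [DecidableEq N] (hA : DistinctSolutionFree a A) (ha : ∑ i, a i = 0) {φ : M →ₗ[R] N}
    (hφ : Function.Surjective φ) (t : N) :
    ∃ B : Finset (LinearMap.ker φ), DistinctSolutionFree a B ∧ #B = #{x ∈ A | φ x = t} := by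
  classical
  obtain ⟨v, rfl⟩ := hφ t
  let g : LinearMap.ker φ → M := fun y => y + v
  have hg : Function.Injective g := (add_left_injective v).comp Subtype.val_injective
  have hmem_range : ∀ x, x ∈ Set.range g ↔ φ x = φ v := fun x => by
    rw [← sub_eq_zero, ← map_sub, ← LinearMap.mem_ker]
    exact ⟨by rintro ⟨y, rfl⟩; simp [g], fun hx => ⟨⟨x - v, hx⟩, sub_add_cancel x v⟩⟩
  refine ⟨A.preimage g hg.injOn, hA.of_forall_add_mem ha
    (LinearMap.ker φ).injective_subtype v fun y hy => ?_, ?_⟩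
  · exact (mem_preimage (hf := hg.injOn)).1 hy
  · rw [card_preimage, filter_congr fun x _ => hmem_range x]

end Module

end Solutions

section ExponentialSums

variable {F V : Type*} [Field F] [AddCommGroup V] [Module F V]

/-- The exponential sum of `A` at the linear functional `φ`, with respect to the additive
character `ψ` of the base field: the Fourier transform of the indicator function of `A`, with the
characters of `V` written as `ψ ∘ φ`. -/
noncomputable def expSum (ψ : AddChar F ℂ) (A : Finset V) (φ : Dual F V) : ℂ :=
  ∑ x ∈ A, ψ (φ x)

theorem exists_addChar_ne_one (G : Type*) [AddCommGroup G] [Finite G] [Nontrivial G] :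
    ∃ ψ : AddChar G ℂ, ψ ≠ 1 := by
  obtain ⟨g, hg⟩ := exists_ne (0 : G)
  obtain ⟨ψ, hψ⟩ := AddChar.exists_apply_ne_zero.2 hg
  exact ⟨ψ, AddChar.ne_one_iff.2 ⟨g, hψ⟩⟩

theorem addChar_map_sum {G S κ : Type*} [AddCommMonoid G] [CommMonoid S] (ψ : AddChar G S)
    (s : Finset κ) (g : κ → G) : ψ (∑ i ∈ s, g i) = ∏ i ∈ s, ψ (g i) :=
  map_prod ψ.toMonoidHom (fun i => Multiplicative.ofAdd (g i)) s

theorem sum_dual_addChar_apply {S : Type*} [CommRing S] [IsDomain S] [DecidableEq V]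
    [Fintype (Dual F V)] {ψ : AddChar F S} (hψ : ψ ≠ 1) (v : V) :
    ∑ φ : Dual F V, ψ (φ v) = if v = 0 then (Fintype.card (Dual F V) : S) else 0 := by
  split_ifs with hv
  · simp [hv]
  · let χ : AddChar (Dual F V) S := ψ.compAddMonoidHom (Dual.eval F V v).toAddMonoidHom
    suffices hχ : χ ≠ 1 from AddChar.sum_eq_zero_of_ne_one hχ
    obtain ⟨t, ht⟩ := AddChar.ne_one_iff.1 hψ
    obtain ⟨f, hf⟩ := Projective.exists_dual_ne_zero F hv
    exact AddChar.ne_one_iff.2 ⟨(t / f v) • f, by simpa [χ, hf] using ht⟩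

theorem card_dual_mul_card_solutions {ι : Type*} [Fintype ι] [DecidableEq ι] [DecidableEq V]
    [Fintype (Dual F V)] {ψ : AddChar F ℂ} (hψ : ψ ≠ 1) (a : ι → F) (A : Finset V) :
    (Fintype.card (Dual F V) : ℂ) * #(solutions a A) =
      ∑ φ : Dual F V, ∏ i, expSum ψ A (a i • φ) := by
  have hprod : ∀ (φ : Dual F V) (x : ι → V),
      ∏ i, ψ ((a i • φ) (x i)) = ψ (φ (∑ i, a i • x i)) := fun φ x => by
    simp only [map_sum, map_smul, addChar_map_sum, LinearMap.smul_apply]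
  simp_rw [expSum, prod_univ_sum, hprod]
  rw [sum_comm]
  simp_rw [sum_dual_addChar_apply hψ]
  rw [← sum_filter, sum_const, nsmul_eq_mul, mul_comm, solutions]

theorem sum_norm_sq_expSum [Finite F] [Fintype (Dual F V)] {ψ : AddChar F ℂ} (hψ : ψ ≠ 1)
    (A : Finset V) :
    ∑ φ : Dual F V, ‖expSum ψ A φ‖ ^ 2 = (Fintype.card (Dual F V) : ℝ) * #A := by
  classical
  have hsq : ∀ φ : Dual F V,
      ((‖expSum ψ A φ‖ ^ 2 : ℝ) : ℂ) = ∑ x ∈ A, ∑ y ∈ A, ψ (φ (x - y)) := by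
    intro φ
    push_cast
    rw [← Complex.mul_conj', expSum, map_sum, sum_mul_sum]
    refine sum_congr rfl fun x _ => sum_congr rfl fun y _ => ?_
    rw [← AddChar.map_neg_eq_conj, ← AddChar.map_add_eq_mul, ← sub_eq_add_neg, map_sub φ]
  apply Complex.ofReal_injective
  calc ((∑ φ : Dual F V, ‖expSum ψ A φ‖ ^ 2 : ℝ) : ℂ)
      = ∑ x ∈ A, ∑ y ∈ A, ∑ φ : Dual F V, ψ (φ (x - y)) := by
        rw [Complex.ofReal_sum]
        simp_rw [hsq]
        rw [sum_comm]
        exact sum_congr rfl fun x _ => sum_comm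
    _ = ∑ _x ∈ A, (Fintype.card (Dual F V) : ℂ) := by
        refine sum_congr rfl fun x hx => ?_
        simp_rw [sum_dual_addChar_apply hψ, sub_eq_zero]
        rw [sum_ite_eq, if_pos hx]
    _ = _ := by simp [mul_comm]

theorem sum_norm_sq_expSum_smul [Finite F] [Fintype (Dual F V)] {ψ : AddChar F ℂ} (hψ : ψ ≠ 1)
    {c : F} (hc : c ≠ 0) (A : Finset V) :
    ∑ φ : Dual F V, ‖expSum ψ A (c • φ)‖ ^ 2 = (Fintype.card (Dual F V) : ℝ) * #A :=
  ((MulAction.bijective₀ hc).sum_comp fun φ => ‖expSum ψ A φ‖ ^ 2).trans (sum_norm_sq_expSum hψ A)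

theorem norm_expSum_le_sub_card [Fintype F] [DecidableEq F] {ψ : AddChar F ℂ} (hψ : ψ ≠ 1)
    {A : Finset V} {φ : Dual F V} {D : ℝ}
    (hD : ∀ t, (Fintype.card F : ℝ) * #{x ∈ A | φ x = t} ≤ D) :
    ‖expSum ψ A φ‖ ≤ D - #A := by
  have hq : (0 : ℝ) < Fintype.card F := by exact_mod_cast Fintype.card_pos
  set b : ℝ := D / Fintype.card F with hb
  -- As `∑ t, ψ t = 0`, the fibre sizes may be shifted by `b`, which makes them all nonpositive.
  have hshift : expSum ψ A φ = ∑ t : F, ((#{x ∈ A | φ x = t} : ℝ) - b : ℝ) * ψ t := by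
    have hfiber : ∀ t, ∑ x ∈ A with φ x = t, ψ (φ x) = #{x ∈ A | φ x = t} * ψ t := fun t => by
      rw [sum_congr rfl fun x hx => by rw [(mem_filter.1 hx).2], sum_const, nsmul_eq_mul]
    push_cast
    simp_rw [sub_mul, sum_sub_distrib, ← mul_sum, AddChar.sum_eq_zero_of_ne_one hψ, mul_zero,
      sub_zero, ← hfiber]
    exact (sum_fiberwise A φ _).symm
  have hcard : ∑ t : F, (#{x ∈ A | φ x = t} : ℝ) = #A := by
    exact_mod_cast (card_eq_sum_card_fiberwise (f := φ) (t := univ) fun _ _ => by simp).symm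
  calc ‖expSum ψ A φ‖ ≤ ∑ t : F, (b - #{x ∈ A | φ x = t}) := by
        rw [hshift]
        refine norm_sum_le_of_le _ fun t _ => ?_
        have hle : (#{x ∈ A | φ x = t} : ℝ) ≤ b := (le_div_iff₀' hq).2 (hD t)
        rw [norm_mul, AddChar.norm_apply, mul_one, Complex.norm_real, Real.norm_eq_abs,
          abs_of_nonpos (sub_nonpos.2 hle), neg_sub]
    _ = D - #A := by
        rw [sum_sub_distrib, hcard, sum_const, card_univ, nsmul_eq_mul, hb,
          mul_div_cancel₀ _ hq.ne']

end ExponentialSums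

section DensityIncrement

theorem prod_le_pow_mul_add_sq_div_two {ι : Type*} [Fintype ι] {k : ℕ}
    (hι : Fintype.card ι = k + 2) {f : ι → ℝ} {M : ℝ} (hf0 : ∀ i, 0 ≤ f i) (hfM : ∀ i, f i ≤ M)
    {i j : ι} (hij : i ≠ j) :
    ∏ m, f m ≤ M ^ k * ((f i ^ 2 + f j ^ 2) / 2) := by
  classical
  have hcompl : #({i, j} : Finset ι)ᶜ = k := by
    rw [card_compl, card_pair hij, hι, Nat.add_sub_cancel]
  have hM : 0 ≤ M := (hf0 i).trans (hfM i)
  calc ∏ m, f m = (∏ m ∈ {i, j}ᶜ, f m) * (f i * f j) := by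
        rw [← prod_pair hij, prod_compl_mul_prod]
    _ ≤ (∏ _m ∈ ({i, j} : Finset ι)ᶜ, M) * ((f i ^ 2 + f j ^ 2) / 2) := by
        gcongr with m
        · exact mul_nonneg (hf0 i) (hf0 j)
        · exact fun m _ => hf0 m
        · exact hfM m
        · linarith [two_mul_le_add_sq (f i) (f j)]
    _ = M ^ k * ((f i ^ 2 + f j ^ 2) / 2) := by rw [prod_const, hcompl]

variable {F V ι : Type*} [Field F] [AddCommGroup V] [Module F V] [Fintype ι] {k : ℕ} {a : ι → F}
  {A : Finset V}

theorem norm_sum_erase_zero_prod_expSum_le [Finite F] [Fintype (Dual F V)] [DecidableEq (Dual F V)]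
    (hι : Fintype.card ι = k + 2) (ha : ∀ i, a i ≠ 0) {ψ : AddChar F ℂ} (hψ : ψ ≠ 1) {M : ℝ}
    (hM0 : 0 ≤ M) (hM : ∀ φ : Dual F V, φ ≠ 0 → ‖expSum ψ A φ‖ ≤ M) :
    ‖∑ φ ∈ (univ : Finset (Dual F V)).erase 0, ∏ i, expSum ψ A (a i • φ)‖ ≤
      M ^ k * (Fintype.card (Dual F V) * #A) := by
  obtain ⟨i, j, hij⟩ := Fintype.exists_pair_of_one_lt_card (α := ι) (by omega)
  calc ‖∑ φ ∈ (univ : Finset (Dual F V)).erase 0, ∏ i, expSum ψ A (a i • φ)‖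
      ≤ ∑ φ ∈ (univ : Finset (Dual F V)).erase 0,
          M ^ k * ((‖expSum ψ A (a i • φ)‖ ^ 2 + ‖expSum ψ A (a j • φ)‖ ^ 2) / 2) := by
        refine norm_sum_le_of_le _ fun φ hφ => ?_
        rw [norm_prod]
        exact prod_le_pow_mul_add_sq_div_two hι (fun _ => norm_nonneg _)
          (fun m => hM _ (smul_ne_zero (ha m) (ne_of_mem_erase hφ))) hij
    _ ≤ ∑ φ : Dual F V,
          M ^ k * ((‖expSum ψ A (a i • φ)‖ ^ 2 + ‖expSum ψ A (a j • φ)‖ ^ 2) / 2) :=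
        sum_le_sum_of_subset_of_nonneg (subset_univ _) fun _ _ _ => by positivity
    _ = M ^ k * (Fintype.card (Dual F V) * #A) := by
        rw [← mul_sum, ← sum_div, sum_add_distrib, sum_norm_sq_expSum_smul hψ (ha i),
          sum_norm_sq_expSum_smul hψ (ha j), add_self_div_two]

theorem DistinctSolutionFree.card_pow_le [Finite F] [Fintype (Dual F V)] (hk : 1 ≤ k)
    (hι : Fintype.card ι = k + 2) (ha : ∀ i, a i ≠ 0) (hA : DistinctSolutionFree a A)
    {ψ : AddChar F ℂ} (hψ : ψ ≠ 1) {M : ℝ} (hM0 : 0 ≤ M)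
    (hM : ∀ φ : Dual F V, φ ≠ 0 → ‖expSum ψ A φ‖ ≤ M) :
    (#A : ℝ) ^ (k + 2) ≤
      Fintype.card (Dual F V) * ((k + 2) ^ 2 * (#A : ℝ) ^ k) +
        M ^ k * (Fintype.card (Dual F V) * #A) := by
  classical
  set E := ∑ φ ∈ (univ : Finset (Dual F V)).erase 0, ∏ i, expSum ψ A (a i • φ) with hE
  have hzero : ∏ i, expSum ψ A (a i • (0 : Dual F V)) = (#A : ℂ) ^ (k + 2) := by
    simp [expSum, hι]
  have hcount : (#A : ℂ) ^ (k + 2) = Fintype.card (Dual F V) * #(solutions a A) - E := by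
    rw [card_dual_mul_card_solutions hψ, ← add_sum_erase _ _ (mem_univ (0 : Dual F V)), hzero, hE,
      add_sub_cancel_right]
  have hsol : (#(solutions a A) : ℝ) ≤ (k + 2) ^ 2 * (#A : ℝ) ^ k := by
    exact_mod_cast hA.card_solutions_le hk hι fun i => IsSMulRegular.of_ne_zero (ha i)
  calc (#A : ℝ) ^ (k + 2) = ‖(#A : ℂ) ^ (k + 2)‖ := by simp
    _ ≤ ‖(Fintype.card (Dual F V) : ℂ) * #(solutions a A)‖ + ‖E‖ := by
        rw [hcount]
        exact norm_sub_le _ _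
    _ = Fintype.card (Dual F V) * #(solutions a A) + ‖E‖ := by simp
    _ ≤ _ := by
        gcongr
        exact norm_sum_erase_zero_prod_expSum_le hι ha hψ hM0 hM

theorem DistinctSolutionFree.density_pow_le [Fintype F] [DecidableEq F] [FiniteDimensional F V]
    [Nontrivial V] (hk : 1 ≤ k) (hι : Fintype.card ι = k + 2) (ha : ∀ i, a i ≠ 0)
    (hA : DistinctSolutionFree a A) {N δ u : ℝ} (hN : N = (Fintype.card F : ℝ) ^ finrank F V)
    (hδ : δ = #A / N)
    (hu : ∀ φ : Dual F V, φ ≠ 0 → ∀ t, (Fintype.card F : ℝ) * #{x ∈ A | φ x = t} ≤ u * N) :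
    δ ≤ u ∧ δ ^ (k + 2) ≤ (k + 2) ^ 2 / N * δ ^ k + (u - δ) ^ k * δ := by
  have : Finite (Dual F V) := Module.finite_of_finite F
  have := Fintype.ofFinite (Dual F V)
  have hN0 : 0 < N := hN ▸ pow_pos (by exact_mod_cast Fintype.card_pos) _
  have hcard : (Fintype.card (Dual F V) : ℝ) = N := by
    rw [hN, Module.card_eq_pow_finrank (K := F), Subspace.dual_finrank_eq, Nat.cast_pow]
  have hAδ : (#A : ℝ) = δ * N := by rw [hδ, div_mul_cancel₀ _ hN0.ne']
  obtain ⟨ψ, hψ⟩ := exists_addChar_ne_one F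
  have hexpSum : ∀ φ : Dual F V, φ ≠ 0 → ‖expSum ψ A φ‖ ≤ (u - δ) * N := fun φ hφ => by
    rw [sub_mul, ← hAδ]
    exact norm_expSum_le_sub_card hψ (hu φ hφ)
  have hδu : δ ≤ u := by
    obtain ⟨φ, hφ⟩ := exists_ne (0 : Dual F V)
    exact sub_nonneg.1 (nonneg_of_mul_nonneg_left ((norm_nonneg _).trans (hexpSum φ hφ)) hN0)
  refine ⟨hδu, ?_⟩
  have hpow := hA.card_pow_le hk hι ha hψ (mul_nonneg (sub_nonneg.2 hδu) hN0.le) hexpSum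
  rw [hcard, hAδ] at hpow
  refine le_of_mul_le_mul_right ?_ (pow_pos hN0 (k + 2))
  calc δ ^ (k + 2) * N ^ (k + 2) = (δ * N) ^ (k + 2) := (mul_pow _ _ _).symm
    _ ≤ N * ((k + 2) ^ 2 * (δ * N) ^ k) + ((u - δ) * N) ^ k * (N * (δ * N)) := hpow
    _ = ((k + 2) ^ 2 / N * δ ^ k + (u - δ) ^ k * δ) * N ^ (k + 2) := by
        rw [mul_pow, mul_pow]
        field_simp
        ring

end DensityIncrement

section Recursion

theorem exists_pow_le_mul_two_pow (m : ℕ) :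
    ∃ L : ℝ, 0 ≤ L ∧ ∀ n : ℕ, (n : ℝ) ^ m ≤ L * 2 ^ n := by
  obtain ⟨L, hL⟩ := (tendsto_pow_const_div_const_pow_of_one_lt m
    (one_lt_two : (1 : ℝ) < 2)).bddAbove_range
  have hL' : ∀ n : ℕ, (n : ℝ) ^ m / 2 ^ n ≤ L := fun n => hL ⟨n, rfl⟩
  exact ⟨L, le_trans (by positivity) (hL' 0), fun n => (div_le_iff₀ (by positivity)).1 (hL' n)⟩

theorem one_div_pow_sub_one_div_succ_pow_le (k : ℕ) {m : ℝ} (hm : 1 ≤ m) :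
    1 / m ^ k - 1 / (m + 1) ^ k ≤ k * 2 ^ k / (m + 1) ^ (k + 1) := by
  have hbernoulli : 1 - (m / (m + 1)) ^ k ≤ k / (m + 1) := by
    have hnonneg : 0 ≤ m / (m + 1) := by positivity
    have h := one_add_mul_sub_le_pow (neg_one_lt_zero.le.trans hnonneg) k
    have hsub : m / (m + 1) - 1 = -(1 / (m + 1)) := by field_simp; ring
    rw [hsub] at h
    linarith [mul_one_div (k : ℝ) (m + 1)]
  have hdouble : 1 / m ^ k ≤ 2 ^ k / (m + 1) ^ k := by
    rw [div_le_div_iff₀ (by positivity) (by positivity), one_mul, ← mul_pow]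
    gcongr
    linarith
  calc 1 / m ^ k - 1 / (m + 1) ^ k
      = 1 / m ^ k * (1 - (m / (m + 1)) ^ k) := by rw [div_pow]; field_simp
    _ ≤ 1 / m ^ k * (k / (m + 1)) := by gcongr
    _ ≤ 2 ^ k / (m + 1) ^ k * (k / (m + 1)) := by gcongr
    _ = k * 2 ^ k / (m + 1) ^ (k + 1) := by rw [pow_succ]; field_simp

theorem div_pow_sub_div_succ_pow_pow_le {k : ℕ} {m C : ℝ} (hm : 1 ≤ m)
    (hC : 2 * ((k : ℝ) * 2 ^ k) ^ k ≤ C) :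
    (C / m ^ k - C / (m + 1) ^ k) ^ k ≤ (C / (m + 1) ^ k) ^ (k + 1) / 2 := by
  have hC0 : 0 ≤ C := le_trans (by positivity) hC
  have hnonneg : 0 ≤ C / m ^ k - C / (m + 1) ^ k := by
    rw [sub_nonneg]
    gcongr
    linarith
  calc (C / m ^ k - C / (m + 1) ^ k) ^ k
      ≤ (C * (k * 2 ^ k / (m + 1) ^ (k + 1))) ^ k := by
        gcongr
        calc C / m ^ k - C / (m + 1) ^ k = C * (1 / m ^ k - 1 / (m + 1) ^ k) := by ring
          _ ≤ _ := by gcongr; exact one_div_pow_sub_one_div_succ_pow_le k hm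
    _ = C ^ k * (2 * (k * 2 ^ k) ^ k) / ((m + 1) ^ k) ^ (k + 1) / 2 := by
        rw [mul_pow, div_pow, ← pow_mul, ← pow_mul, mul_comm k (k + 1)]
        field_simp
    _ ≤ C ^ k * C / ((m + 1) ^ k) ^ (k + 1) / 2 := by gcongr
    _ = (C / (m + 1) ^ k) ^ (k + 1) / 2 := by rw [div_pow, pow_succ C]

theorem div_le_div_sq_div_two {b C d L N : ℝ} (hb : 0 ≤ b) (hd : 0 < d) (hN : 0 < N)
    (hdLN : d ^ 2 ≤ L * N) (hC1 : 1 ≤ C) (hC : 2 * b * L ≤ C) : b / N ≤ (C / d) ^ 2 / 2 := by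
  calc b / N ≤ C / d ^ 2 / 2 := by
        rw [div_div, div_le_div_iff₀ hN (by positivity)]
        calc b * (d ^ 2 * 2) ≤ b * (L * N * 2) := by gcongr
          _ = 2 * b * L * N := by ring
          _ ≤ C * N := by gcongr
    _ ≤ C ^ 2 / d ^ 2 / 2 := by
        gcongr
        exact le_self_pow₀ hC1 two_ne_zero
    _ = (C / d) ^ 2 / 2 := by rw [div_pow]

/-- The inequality satisfied by the density `δ` of a solution-free set in a space with `N` elements
propagates the bound `C / m ^ k` on densities from each dimension `m` to dimension `m + 1`. Here
`k + 2` is the number of variables of the equation. -/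
def PropagatesDensityBound (k : ℕ) (C : ℝ) : Prop :=
  ∀ m : ℕ, 1 ≤ m → ∀ N δ : ℝ, 2 ^ (m + 1) ≤ N → δ ≤ C / (m : ℝ) ^ k →
    δ ^ (k + 2) ≤ (k + 2) ^ 2 / N * δ ^ k + (C / (m : ℝ) ^ k - δ) ^ k * δ →
    δ ≤ C / ((m : ℝ) + 1) ^ k

theorem exists_propagatesDensityBound (k : ℕ) : ∃ C : ℝ, 1 ≤ C ∧ PropagatesDensityBound k C := by
  obtain ⟨L, hL0, hL⟩ := exists_pow_le_mul_two_pow (k * 2)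
  obtain ⟨C, hC1, hCk, hCL⟩ :
      ∃ C : ℝ, 1 ≤ C ∧ 2 * ((k : ℝ) * 2 ^ k) ^ k ≤ C ∧ 2 * (k + 2) ^ 2 * L ≤ C :=
    ⟨max 1 (max (2 * ((k : ℝ) * 2 ^ k) ^ k) (2 * (k + 2) ^ 2 * L)), by simp, by simp, by simp⟩
  refine ⟨C, hC1, fun m hm N δ hN hδm hδ => ?_⟩
  by_contra! hlt
  have hm1 : (1 : ℝ) ≤ m := by exact_mod_cast hm
  have hN0 : 0 < N := lt_of_lt_of_le (by positivity) hN
  have hδ0 : 0 < δ := lt_trans (by positivity) hlt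
  have hdiag : (k + 2) ^ 2 / N < δ ^ 2 / 2 := by
    have hLN : (((m : ℝ) + 1) ^ k) ^ 2 ≤ L * N := by
      calc (((m : ℝ) + 1) ^ k) ^ 2 ≤ L * 2 ^ (m + 1) := by
            rw [← pow_mul]
            exact_mod_cast hL (m + 1)
        _ ≤ L * N := by gcongr
    calc (k + 2) ^ 2 / N ≤ (C / ((m : ℝ) + 1) ^ k) ^ 2 / 2 :=
          div_le_div_sq_div_two (by positivity) (by positivity) hN0 hLN hC1 hCL
      _ < δ ^ 2 / 2 := by gcongr
  have hgap : (C / (m : ℝ) ^ k - δ) ^ k ≤ δ ^ (k + 1) / 2 := by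
    calc (C / (m : ℝ) ^ k - δ) ^ k ≤ (C / (m : ℝ) ^ k - C / ((m : ℝ) + 1) ^ k) ^ k := by
          have := sub_nonneg.2 hδm
          gcongr
      _ ≤ (C / ((m : ℝ) + 1) ^ k) ^ (k + 1) / 2 := div_pow_sub_div_succ_pow_pow_le hm1 hCk
      _ ≤ δ ^ (k + 1) / 2 := by gcongr
  refine hδ.not_gt ?_
  calc (k + 2) ^ 2 / N * δ ^ k + (C / (m : ℝ) ^ k - δ) ^ k * δ
      < δ ^ 2 / 2 * δ ^ k + δ ^ (k + 1) / 2 * δ :=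
        add_lt_add_of_lt_of_le (by gcongr) (by gcongr)
    _ = δ ^ (k + 2) := by ring

end Recursion

theorem card_le_card_pow_finrank {F V : Type*} [Field F] [Fintype F] [AddCommGroup V] [Module F V]
    [FiniteDimensional F V] (A : Finset V) : #A ≤ Fintype.card F ^ finrank F V := by
  have : Finite V := Module.finite_of_finite F
  have := Fintype.ofFinite V
  exact (card_le_univ A).trans_eq Module.card_eq_pow_finrank

theorem DistinctSolutionFree.card_le {F ι : Type*} [Field F] [Fintype F] [Fintype ι] {k : ℕ}
    (hk : 1 ≤ k) (hι : Fintype.card ι = k + 2) {a : ι → F} (ha : ∀ i, a i ≠ 0)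
    (hsum : ∑ i, a i = 0) {C : ℝ} (hC1 : 1 ≤ C) (hC : PropagatesDensityBound k C)
    {n : ℕ} (hn : 1 ≤ n) :
    ∀ {V : Type*} [AddCommGroup V] [Module F V], finrank F V = n →
      ∀ {A : Finset V}, DistinctSolutionFree a A →
        (#A : ℝ) ≤ C / (n : ℝ) ^ k * (Fintype.card F : ℝ) ^ n := by
  classical
  induction n, hn using Nat.le_induction with
  | base =>
    intro V _ _ hV A _
    have : FiniteDimensional F V := .of_finrank_pos (by omega)
    calc (#A : ℝ) ≤ 1 * (Fintype.card F : ℝ) ^ 1 := by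
          rw [one_mul, ← hV]
          exact_mod_cast card_le_card_pow_finrank A
      _ ≤ C / ((1 : ℕ) : ℝ) ^ k * (Fintype.card F : ℝ) ^ 1 := by
          gcongr
          simpa using hC1
  | succ m hm ih =>
    intro V _ _ hV A hA
    have : FiniteDimensional F V := .of_finrank_pos (by omega)
    have : Nontrivial V := nontrivial_of_finrank_pos (R := F) (by omega)
    have hq : (2 : ℝ) ≤ Fintype.card F := by exact_mod_cast Fintype.one_lt_card (α := F)
    have hfiber : ∀ φ : Dual F V, φ ≠ 0 → ∀ t, (Fintype.card F : ℝ) * #{x ∈ A | φ x = t} ≤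
        C / (m : ℝ) ^ k * (Fintype.card F : ℝ) ^ (m + 1) := by
      intro φ hφ t
      obtain ⟨B, hB, hBcard⟩ := hA.exists_ker_card_eq hsum (LinearMap.surjective hφ) t
      have hker : finrank F (LinearMap.ker φ) = m := by
        have := Dual.finrank_ker_add_one_of_ne_zero hφ
        omega
      rw [← hBcard]
      calc (Fintype.card F : ℝ) * #B
          ≤ Fintype.card F * (C / (m : ℝ) ^ k * (Fintype.card F : ℝ) ^ m) := by
            gcongr
            exact ih hker hB
        _ = C / (m : ℝ) ^ k * (Fintype.card F : ℝ) ^ (m + 1) := by ring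
    obtain ⟨hδu, hδ⟩ := hA.density_pow_le hk hι ha (by rw [hV]) rfl hfiber
    rw [Nat.cast_succ, ← div_le_iff₀ (by positivity)]
    exact hC m hm _ _ (by gcongr) hδu hδ

theorem liu_spencer_roth_meshulam_general {k : ℕ} (hk : 1 ≤ k) :
    ∃ C : ℝ, 0 < C ∧
      ∀ {F V ι : Type*} [Field F] [Fintype F] [AddCommGroup V] [Module F V] [Fintype ι],
        1 ≤ finrank F V → Fintype.card ι = k + 2 →
        ∀ a : ι → F, (∀ i, a i ≠ 0) → ∑ i, a i = 0 →
          ∀ A : Finset V, DistinctSolutionFree a A →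
            (#A : ℝ) ≤ C * (Fintype.card F : ℝ) ^ finrank F V / (finrank F V : ℝ) ^ k := by
  obtain ⟨C, hC1, hC⟩ := exists_propagatesDensityBound k
  refine ⟨C, by linarith, fun hV hι a ha hsum A hA => ?_⟩
  rw [mul_div_right_comm]
  exact hA.card_le hk hι ha hsum hC1 hC hV rfl

theorem liu_spencer_roth_meshulam
    (F : Type) [Field F] [Fintype F] (r : ℕ) (hr : 3 ≤ r) :
    ∃ C : ℝ, 0 < C ∧
      ∀ (n : ℕ), 1 ≤ n →
        ∀ (a : Fin r → F), (∀ i, a i ≠ 0) → (∑ i, a i) = 0 →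
          ∀ A : Finset (Fin n → F),
            (¬ ∃ x : Fin r → Fin n → F,
                (∀ i, x i ∈ A) ∧ Function.Injective x ∧ ∑ i, a i • x i = 0) →
            (A.card : ℝ) ≤ C * (Fintype.card F : ℝ) ^ n / (n : ℝ) ^ ((r : ℝ) - 2) := by
  obtain ⟨k, rfl⟩ := Nat.exists_eq_add_of_le' (show 2 ≤ r by omega)
  obtain ⟨C, hC0, hC⟩ := liu_spencer_roth_meshulam_general (k := k) (by omega)
  exact ⟨C, hC0, fun n hn a ha hsum A hA => by
    simpa using hC (by simpa using hn) (by simp) a ha hsum A hA⟩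
end

section
/- There is an absolute constant C > 0 such that the following holds. Let G be an abelian group, let A ⊆ G be a finite nonempty set, and let c ∈ (0,1] be such that E(A) ≥ c·|A|³. Then there is a subset A′ ⊆ A such that |A′| ≥ c^C·|A|/C and |A′ + A′| ≤ C·c^{−C}·|A′|. -/
open Pointwise

/-- The additive energy of a finite set: the number of quadruples `(s₁,s₂,s₃,s₄)`
with `s₁ + s₂ = s₃ + s₄`. -/
def addEnergy {G : Type*} [AddCommGroup G] [DecidableEq G] (S : Finset G) : ℕ :=
  (((S ×ˢ S) ×ˢ S ×ˢ S).filter fun p => p.1.1 + p.1.2 = p.2.1 + p.2.2).card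

/-!
Let `r x` be the number of representations of `x` as a difference of two elements of `A`, so that
`∑ r = |A|²` and `∑ r² = E(A)`, and call a difference unpopular if it has few representations.
A pair with an unpopular difference lies in few of the sets `A ∩ (x + A)`, whose sizes are `r x`;
summing over `x` therefore yields a large `X = A ∩ (x + A)` in which few pairs have an unpopular
difference. Let `A'` be the set of those `a ∈ X` for which `a - b` is unpopular for at most a
quarter of the `b ∈ X`. For `a, a' ∈ A'`, at least half of the `b ∈ X` make both `a - b` and
`a' - b` popular, so `a - a' = (a - b) - (a' - b)` has many representations by quadruples from
`A`. There are only `|A|⁴` quadruples, hence `A' - A'` is small, and so is `A' + A'` by Ruzsa's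
triangle inequality.
-/

section BalogSzemerediGowers

open Finset hiding addEnergy
open scoped Combinatorics.Additive

section Relation

variable {ι κ : Type*}

lemma mul_card_filter_lt_mul_card_filter_le {X : Finset ι} {Y : Finset κ} {R : ι → κ → Prop}
    [∀ a b, Decidable (R a b)] {k l : ℕ}
    (h : k * l * #{p ∈ X ×ˢ Y | R p.1 p.2} ≤ #X * #Y) :
    k * #{a ∈ X | #Y < l * #{b ∈ Y | R a b}} ≤ #X := by
  obtain rfl | hY := Y.eq_empty_or_nonempty
  · simp
  refine Nat.le_of_mul_le_mul_right ?_ hY.card_pos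
  calc k * #{a ∈ X | #Y < l * #{b ∈ Y | R a b}} * #Y
      = k * (#{a ∈ X | #Y < l * #{b ∈ Y | R a b}} * #Y) := mul_assoc _ _ _
    _ ≤ k * ∑ a ∈ X with #Y < l * #{b ∈ Y | R a b}, l * #{b ∈ Y | R a b} := by
        gcongr
        exact card_nsmul_le_sum _ _ _ fun a ha => (mem_filter.1 ha).2.le
    _ ≤ k * ∑ a ∈ X, l * #{b ∈ Y | R a b} := by
        gcongr
        exact filter_subset _ _
    _ = k * l * #{p ∈ X ×ˢ Y | R p.1 p.2} := by
        simp only [← mul_sum, card_filter, sum_product, mul_assoc]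
    _ ≤ #X * #Y := h

lemma card_le_two_mul_card_filter_four_mul_card_filter_le {X : Finset ι} {Y : Finset κ}
    {R : ι → κ → Prop} [∀ a b, Decidable (R a b)]
    (h : 8 * #{p ∈ X ×ˢ Y | R p.1 p.2} ≤ #X * #Y) :
    #X ≤ 2 * #{a ∈ X | 4 * #{b ∈ Y | R a b} ≤ #Y} := by
  have hbad := mul_card_filter_lt_mul_card_filter_le (k := 2) (l := 4) h
  have hsplit := card_filter_add_card_filter_not (s := X) fun a => 4 * #{b ∈ Y | R a b} ≤ #Y
  simp only [not_le] at hsplit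
  lia

lemma card_le_two_mul_card_filter_not_and_not {X : Finset ι} {P Q : ι → Prop} [DecidablePred P]
    [DecidablePred Q] (hP : 4 * #{b ∈ X | P b} ≤ #X) (hQ : 4 * #{b ∈ X | Q b} ≤ #X) :
    #X ≤ 2 * #{b ∈ X | ¬ P b ∧ ¬ Q b} := by
  classical
  have hsplit := card_filter_add_card_filter_not (s := X) fun b => P b ∨ Q b
  have hunion : #{b ∈ X | P b ∨ Q b} ≤ #{b ∈ X | P b} + #{b ∈ X | Q b} := by
    rw [filter_or]
    exact card_union_le _ _
  simp only [not_or] at hsplit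
  lia

end Relation

section AddGroup

variable {G : Type*} [AddGroup G] [DecidableEq G]

lemma sum_addConvolution (A B : Finset G) :
    ∑ x ∈ A + B, A.addConvolution B x = #A * #B := by
  rw [← card_product]
  exact (card_eq_sum_card_fiberwise fun p hp =>
    add_mem_add (mem_product.1 hp).1 (mem_product.1 hp).2).symm

lemma sum_card_fiber_mul_card_fiber_le {ι κ : Type*} (S : Finset ι) (S' : Finset κ) (f : ι → G)
    (g : κ → G) (X : Finset G) (a a' : G) :
    ∑ b ∈ X, #{s ∈ S | f s = a - b} * #{s ∈ S' | g s = a' - b} ≤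
      #{p ∈ S ×ˢ S' | f p.1 - g p.2 = a - a'} := by
  calc ∑ b ∈ X, #{s ∈ S | f s = a - b} * #{s ∈ S' | g s = a' - b}
      = ∑ b ∈ X, #{p ∈ {p ∈ S ×ˢ S' | f p.1 - g p.2 = a - a'} | -f p.1 + a = b} := by
        refine sum_congr rfl fun b _ => ?_
        rw [← card_product, ← filter_product, filter_filter]
        congr! 2 with p
        constructor
        · rintro ⟨hf, hg⟩
          simp [hf, hg]
        · rintro ⟨h, rfl⟩
          have ha' : a' = g p.2 - f p.1 + a := by rw [← neg_sub, h, neg_sub, sub_add_cancel]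
          simp [ha', sub_eq_add_neg, add_assoc]
    _ ≤ #{p ∈ S ×ˢ S' | f p.1 - g p.2 = a - a'} := by
        rw [sum_card_fiberwise_eq_card_filter]
        exact card_filter_le _ _

lemma sum_addConvolution_neg_mul_addConvolution_neg_le (A B C D X : Finset G) (a a' : G) :
    ∑ b ∈ X, A.addConvolution (-B) (a - b) * C.addConvolution (-D) (a' - b) ≤
      #{q ∈ (A ×ˢ B) ×ˢ C ×ˢ D | q.1.1 - q.1.2 - (q.2.1 - q.2.2) = a - a'} := by
  simp only [← card_sub_eq]
  exact sum_card_fiber_mul_card_fiber_le (A ×ˢ B) (C ×ˢ D) (fun p => p.1 - p.2)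
    (fun p => p.1 - p.2) X a a'

/-- The element `x` is an unpopular difference of `A`: it has fewer than `T` representations `a - b`
with `a, b ∈ A`. The threshold is real, as it will be a multiple of the energy of `A`; an `abbrev`
makes the predicate decidable. -/
abbrev IsUnpopularDiff (A : Finset G) (T : ℝ) (x : G) : Prop :=
  (A.addConvolution (-A) x : ℝ) < T

/-- The ordered pairs of elements of `X` with an unpopular difference, whose number measures how far
`X` is from having only popular differences. -/
noncomputable def unpopularPairs (A : Finset G) (T : ℝ) (X : Finset G) : Finset (G × G) :=
  {p ∈ X ×ˢ X | IsUnpopularDiff A T (p.1 - p.2)}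

lemma unpopularPairs_inter_vadd (A : Finset G) (T : ℝ) (X : Finset G) (x : G) :
    unpopularPairs A T (X ∩ (x +ᵥ A)) =
      {p ∈ unpopularPairs A T X | p.1 ∈ x +ᵥ A ∧ p.2 ∈ x +ᵥ A} := by
  ext p
  simp only [unpopularPairs, mem_filter, mem_product, mem_inter]
  tauto

lemma half_card_mul_sq_le_card_filter_sub_sub_sub_eq {A X : Finset G} {T : ℝ} {a a' : G}
    (hT : 0 ≤ T)
    (ha : 4 * #{b ∈ X | IsUnpopularDiff A T (a - b)} ≤ #X)
    (ha' : 4 * #{b ∈ X | IsUnpopularDiff A T (a' - b)} ≤ #X) :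
    #X / 2 * T ^ 2 ≤
      (#{q ∈ (A ×ˢ A) ×ˢ A ×ˢ A | q.1.1 - q.1.2 - (q.2.1 - q.2.2) = a - a'} : ℝ) := by
  let r : G → ℝ := fun x => A.addConvolution (-A) x
  let B : Finset G :=
    {b ∈ X | ¬ IsUnpopularDiff A T (a - b) ∧ ¬ IsUnpopularDiff A T (a' - b)}
  have hXB : (#X : ℝ) ≤ 2 * #B := by
    exact_mod_cast card_le_two_mul_card_filter_not_and_not ha ha'
  calc #X / 2 * T ^ 2 ≤ #B * T ^ 2 := by gcongr; linarith
    _ = ∑ _b ∈ B, T * T := by rw [sum_const, nsmul_eq_mul, sq]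
    _ ≤ ∑ b ∈ B, r (a - b) * r (a' - b) := by
        gcongr with b hb
        · exact not_lt.1 (mem_filter.1 hb).2.1
        · exact not_lt.1 (mem_filter.1 hb).2.2
    _ ≤ #{q ∈ (A ×ˢ A) ×ˢ A ×ˢ A | q.1.1 - q.1.2 - (q.2.1 - q.2.2) = a - a'} := by
        simp only [r, ← Nat.cast_mul, ← Nat.cast_sum, Nat.cast_le]
        exact sum_addConvolution_neg_mul_addConvolution_neg_le A A A A B a a'

lemma card_sub_mul_le_card_pow_four {A X Y : Finset G} {T : ℝ} (hT : 0 ≤ T)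
    (hY : ∀ a ∈ Y, 4 * #{b ∈ X | IsUnpopularDiff A T (a - b)} ≤ #X) :
    #(Y - Y) * (#X / 2 * T ^ 2) ≤ (#A : ℝ) ^ 4 := by
  let Q := (A ×ˢ A) ×ˢ A ×ˢ A
  calc #(Y - Y) * (#X / 2 * T ^ 2)
      = ∑ _d ∈ Y - Y, (#X : ℝ) / 2 * T ^ 2 := by rw [sum_const, nsmul_eq_mul]
    _ ≤ ∑ d ∈ Y - Y, (#{q ∈ Q | q.1.1 - q.1.2 - (q.2.1 - q.2.2) = d} : ℝ) := by
        gcongr with d hd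
        obtain ⟨a, ha, a', ha', rfl⟩ := mem_sub.1 hd
        exact half_card_mul_sq_le_card_filter_sub_sub_sub_eq hT (hY a ha) (hY a' ha')
    _ ≤ #Q := by
        rw [← Nat.cast_sum, sum_card_fiberwise_eq_card_filter]
        exact_mod_cast card_filter_le _ _
    _ = (#A : ℝ) ^ 4 := by
        simp only [Q, card_product, Nat.cast_mul]
        ring

end AddGroup

variable {G : Type*} [AddCommGroup G] [DecidableEq G]

lemma addEnergy_eq_finset_addEnergy (A : Finset G) : addEnergy A = E[A] :=
  (addEnergy_eq_card_filter A A).symm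

lemma finset_addEnergy_neg_right (A B : Finset G) : E[A, -B] = E[A, B] := by
  refine card_equiv ((Equiv.refl _).prodCongr
    ((Equiv.prodComm _ _).trans ((Equiv.neg G).prodCongr (Equiv.neg G)))) fun q => ?_
  simp [← sub_eq_add_neg, sub_eq_sub_iff_add_eq_add, and_comm]

lemma finset_addEnergy_eq_sum_sq_addConvolution_neg (A B : Finset G) :
    E[A, B] = ∑ x ∈ A - B, A.addConvolution (-B) x ^ 2 := by
  rw [← finset_addEnergy_neg_right, addEnergy_eq_sum_sq', sub_eq_add_neg]
  rfl

lemma card_filter_mem_vadd_and_mem_vadd_le (A B D : Finset G) (a b : G) :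
    #{x ∈ D | a ∈ x +ᵥ A ∧ b ∈ x +ᵥ B} ≤ A.addConvolution (-B) (a - b) := by
  rw [← card_sub_eq]
  refine card_le_card_of_injOn (fun x => (a - x, b - x)) (fun x hx => ?_) fun x _ y _ hxy => ?_
  · obtain ⟨-, ha, hb⟩ := mem_filter.1 hx
    rw [← neg_vadd_mem_iff, vadd_eq_add, neg_add_eq_sub] at ha hb
    simp [ha, hb]
  · exact sub_right_injective (Prod.ext_iff.1 hxy).1

lemma sum_card_unpopularPairs_inter_vadd_le (A X D : Finset G) {T : ℝ} (hT : 0 ≤ T) :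
    ∑ x ∈ D, (#(unpopularPairs A T (X ∩ (x +ᵥ A))) : ℝ) ≤ T * #X ^ 2 := by
  calc ∑ x ∈ D, (#(unpopularPairs A T (X ∩ (x +ᵥ A))) : ℝ)
      = ∑ p ∈ unpopularPairs A T X, (#{x ∈ D | p.1 ∈ x +ᵥ A ∧ p.2 ∈ x +ᵥ A} : ℝ) := by
        simp only [unpopularPairs_inter_vadd]
        exact_mod_cast sum_card_bipartiteAbove_eq_sum_card_bipartiteBelow
          fun (x : G) (p : G × G) => p.1 ∈ x +ᵥ A ∧ p.2 ∈ x +ᵥ A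
    _ ≤ ∑ _p ∈ unpopularPairs A T X, T := by
        gcongr with p hp
        exact (Nat.cast_le.2 (card_filter_mem_vadd_and_mem_vadd_le A A D p.1 p.2)).trans
          (mem_filter.1 hp).2.le
    _ = T * #(unpopularPairs A T X) := by rw [sum_const, nsmul_eq_mul, mul_comm]
    _ ≤ T * #X ^ 2 := by
        rw [sq, ← Nat.cast_mul, ← card_product]
        gcongr
        exact filter_subset _ _

lemma exists_subset_le_card_unpopularPairs_le {A : Finset G} {K : ℝ} (hA : A.Nonempty)
    (hK : 0 ≤ K) (hE : K * #A ^ 2 ≤ E[A]) :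
    ∃ X ⊆ A, K / 2 ≤ #X ∧ 8 * #(unpopularPairs A (K / 16) X) ≤ #X * #X := by
  set u : G → ℝ := fun x => #(unpopularPairs A (K / 16) (A ∩ (x +ᵥ A)))
  set r : G → ℝ := fun x => A.addConvolution (-A) x
  have hr1 : ∑ x ∈ A - A, r x = #A ^ 2 := by
    rw [sub_eq_add_neg, ← Nat.cast_sum, sum_addConvolution, card_neg, Nat.cast_mul, sq]
  have hr2 : ∑ x ∈ A - A, r x ^ 2 = E[A] := by
    rw [finset_addEnergy_eq_sum_sq_addConvolution_neg]
    push_cast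
    rfl
  have hu1 : ∑ x ∈ A - A, u x ≤ K / 16 * #A ^ 2 :=
    sum_card_unpopularPairs_inter_vadd_le A A (A - A) (by positivity)
  obtain ⟨x, hx, hux⟩ : ∃ x ∈ A - A, 8 * u x + K / 2 * r x ≤ r x ^ 2 := by
    -- Each summand on the left contributes at most `K / 2 * |A| ^ 2`, half of the energy bound.
    refine exists_le_of_sum_le (hA.sub hA) ?_
    rw [sum_add_distrib, ← mul_sum, ← mul_sum, hr1, hr2]
    linarith
  have hrx : (#(A ∩ (x +ᵥ A)) : ℝ) = r x := by rw [card_inter_vadd]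
  have hrpos : 0 < r x := by
    rw [sub_eq_add_neg] at hx
    exact Nat.cast_pos.2 (addConvolution_pos.2 hx)
  refine ⟨A ∩ (x +ᵥ A), inter_subset_left, ?_, ?_⟩
  · rw [hrx]
    have : 0 ≤ u x := Nat.cast_nonneg _
    exact le_of_mul_le_mul_right (by linarith) hrpos
  · rify
    rw [hrx]
    have : 0 ≤ K / 2 * r x := by positivity
    change 8 * u x ≤ r x * r x
    linarith

lemma exists_subset_card_sub_le {A : Finset G} {K : ℝ} (hA : A.Nonempty) (hK : 0 ≤ K)
    (hE : K * #A ^ 2 ≤ E[A]) :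
    ∃ Y ⊆ A, K / 4 ≤ #Y ∧ K ^ 3 * #(Y - Y) ≤ 2 ^ 10 * (#A : ℝ) ^ 4 := by
  obtain ⟨X, hXA, hKX, hX⟩ := exists_subset_le_card_unpopularPairs_le hA hK hE
  set Y : Finset G := {a ∈ X | 4 * #{b ∈ X | IsUnpopularDiff A (K / 16) (a - b)} ≤ #X}
  have hXY : (#X : ℝ) ≤ 2 * #Y := by
    exact_mod_cast card_le_two_mul_card_filter_four_mul_card_filter_le
      (R := fun a b => IsUnpopularDiff A (K / 16) (a - b)) hX
  refine ⟨Y, (filter_subset _ _).trans hXA, by linarith, ?_⟩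
  calc K ^ 3 * #(Y - Y) = 2 ^ 10 * (#(Y - Y) * (K / 2 / 2 * (K / 16) ^ 2)) := by ring
    _ ≤ 2 ^ 10 * (#(Y - Y) * (#X / 2 * (K / 16) ^ 2)) := by gcongr
    _ ≤ 2 ^ 10 * (#A : ℝ) ^ 4 := by
        gcongr
        exact card_sub_mul_le_card_pow_four (by positivity) fun a ha => (mem_filter.1 ha).2

lemma exists_subset_subConst_le {A : Finset G} {c : ℝ} (hA : A.Nonempty) (hc : 0 < c)
    (hE : c * #A ^ 3 ≤ E[A]) :
    ∃ Y ⊆ A, c / 4 * #A ≤ #Y ∧ (δ[Y] : ℝ) ≤ 2 ^ 12 / c ^ 4 := by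
  have hn : (0 : ℝ) < #A := Nat.cast_pos.2 hA.card_pos
  obtain ⟨Y, hYA, hY, hsub⟩ := exists_subset_card_sub_le (K := c * #A) hA (by positivity)
    (by linarith)
  have hcY : c / 4 * #A ≤ #Y := by linarith
  have hYpos : (0 : ℝ) < #Y := lt_of_lt_of_le (by positivity) hcY
  have hdiff : c ^ 3 * #(Y - Y) ≤ 2 ^ 10 * (#A : ℝ) :=
    le_of_mul_le_mul_right (by linarith) (pow_pos hn 3)
  refine ⟨Y, hYA, hcY, ?_⟩
  rw [cast_subConst, div_le_div_iff₀ hYpos (by positivity)]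
  calc #(Y - Y) * c ^ 4 = c * (c ^ 3 * #(Y - Y)) := by ring
    _ ≤ c * (2 ^ 10 * #A) := by gcongr
    _ = 2 ^ 12 * (c / 4 * #A) := by ring
    _ ≤ 2 ^ 12 * #Y := by gcongr

lemma inv_pow_le_rpow_neg {c C : ℝ} {n : ℕ} (hc : 0 < c) (hc1 : c ≤ 1) (hn : n ≤ C) :
    (c ^ n)⁻¹ ≤ c ^ (-C) := by
  rw [← Real.rpow_natCast, ← Real.rpow_neg hc.le]
  exact Real.rpow_le_rpow_of_exponent_ge hc hc1 (neg_le_neg hn)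

theorem balog_szemeredi_gowers_general {A : Finset G} {c : ℝ} (hA : A.Nonempty) (hc : 0 < c)
    (hE : c * #A ^ 3 ≤ addEnergy A) :
    ∃ A' ⊆ A, c / 4 * #A ≤ #A' ∧ (σ[A'] : ℝ) ≤ 2 ^ 24 / c ^ 8 := by
  rw [addEnergy_eq_finset_addEnergy] at hE
  obtain ⟨A', hA', hcard, hδ⟩ := exists_subset_subConst_le hA hc hE
  refine ⟨A', hA', hcard, ?_⟩
  calc (σ[A'] : ℝ) ≤ δ[A'] ^ 2 := by exact_mod_cast addConst_le_subConst_sq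
    _ ≤ (2 ^ 12 / c ^ 4) ^ 2 := by gcongr
    _ = 2 ^ 24 / c ^ 8 := by ring

end BalogSzemerediGowers

theorem balog_szemeredi_gowers :
    ∃ C : ℝ, 0 < C ∧
      ∀ (G : Type) [AddCommGroup G] [DecidableEq G] (A : Finset G) (c : ℝ),
        A.Nonempty → 0 < c → c ≤ 1 → c * (A.card : ℝ) ^ 3 ≤ (addEnergy A : ℝ) →
        ∃ A' : Finset G, A' ⊆ A ∧
          c ^ C * A.card / C ≤ (A'.card : ℝ) ∧
          ((A' + A').card : ℝ) ≤ C * c ^ (-C) * A'.card := by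
  refine ⟨2 ^ 24, by norm_num, fun G _ _ A c hA hc hc1 hE => ?_⟩
  obtain ⟨A', hA', hcard, hadd⟩ := balog_szemeredi_gowers_general hA hc hE
  refine ⟨A', hA', ?_, ?_⟩
  · calc c ^ (2 ^ 24 : ℝ) * A.card / 2 ^ 24
        ≤ c * A.card / 4 := by
          gcongr
          · exact Real.rpow_le_self_of_le_one hc.le hc1 (by norm_num)
          · norm_num
      _ ≤ A'.card := by linarith
  · rw [← Finset.cast_addConst_mul_card]
    gcongr
    exact hadd.trans (mul_le_mul_of_nonneg_left
      (inv_pow_le_rpow_neg hc hc1 (by norm_num)) (by norm_num))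
end
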